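/- arXiv:2001.11609 — 8 statements merged into one kernel-verified Lean document; each statement's English description precedes it below -/
import Mathlib

section
/- Let p be a prime, e > 1, q = p^e, and let H be a normalized generalized Hadamard matrix H(q,λ) over F_q of order n = qλ. If the associated GH code C_H is F_p-additive, then n is a power of p; that is, writing n = p^t·s with gcd(p,s) = 1, one has s = 1. -/
/-!
The code `C_H` has exactly `n * q` words: a word `h + α • 𝟏` determines `α` through its first
coordinate (the first column of `H` vanishes), and then the row `h`, because distinct rows of `H`
differ somewhere. An `F_p`-additive code is a finite vector space over `F_p`, so `n * q` is a power
of `p`. Hence the divisor `s` of `n`, being prime to `p`, is `1`.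
-/

open scoped BigOperators

section Defs

variable {ι : Type*} {F : Type*} [Field F]

/-- `H` is a generalised Hadamard matrix with parameter `lam`: for any two distinct rows,
every difference value is attained exactly `lam` times. -/
def IsGH (lam : ℕ) (H : Matrix ι ι F) : Prop :=
  ∀ i j : ι, i ≠ j → ∀ a : F, Nat.card {s : ι // H i s - H j s = a} = lam

/-- The generalised Hadamard code `C_H` associated to a matrix `H`: the union of all
translates of the rows of `H` by constant vectors. -/
def ghCode (H : Matrix ι ι F) : Set (ι → F) :=
  {v | ∃ (i : ι) (α : F), v = fun s => H i s + α}

/-- The kernel `K(C)` of a code `C`. -/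
def kerSet (C : Set (ι → F)) : Set (ι → F) :=
  {x | ∀ α : F, (fun c => α • x + c) '' C = C}

/-- The `p`-kernel `K_p(C)` of a code `C`. -/
def pkerSet (C : Set (ι → F)) : Set (ι → F) :=
  {x | (fun c => x + c) '' C = C}

end Defs

/-- A matrix is normalized if its first row and first column are identically zero. -/
def IsNormalized {n : ℕ} {F : Type*} [Zero F] (H : Matrix (Fin n) (Fin n) F) : Prop :=
  ∀ i j : Fin n, (i.val = 0 ∨ j.val = 0) → H i j = 0

/-- A code over `GF(p^e)` is `F_p`-additive if it is an `F_p`-linear subspace. -/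
def IsFpAdditive (p : ℕ) [Fact p.Prime] {e : ℕ} {ι : Type*}
    (C : Set (ι → GaloisField p e)) : Prop :=
  ∃ S : Submodule (ZMod p) (ι → GaloisField p e), C = ↑S

/-- The rank of a code: the dimension over `F` of its `F`-linear span. -/
noncomputable def rankC (F : Type*) [Field F] {ι : Type*} (C : Set (ι → F)) : ℕ :=
  Module.finrank F (Submodule.span F C)

/-- The dimension over `F` of the kernel of a code. -/
noncomputable def kerDim (F : Type*) [Field F] {ι : Type*} (C : Set (ι → F)) : ℕ :=
  Module.finrank F (Submodule.span F (kerSet C))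

theorem stmt1 (p e lam n t s : ℕ) [Fact p.Prime] (he : 1 < e)
    (hn : n = p ^ e * lam) (hts : n = p ^ t * s) (hcop : Nat.gcd p s = 1)
    (H : Matrix (Fin n) (Fin n) (GaloisField p e))
    (hGH : IsGH lam H) (hnorm : IsNormalized H)
    (hadd : IsFpAdditive p (ghCode H)) :
    s = 1 := by
  have hp : p.Prime := Fact.out
  obtain ⟨S, hS⟩ := hadd
  -- The zero word lies in the code, so there is at least one row.
  obtain ⟨i₀, -⟩ : (0 : Fin n → GaloisField p e) ∈ ghCode H := by
    rw [hS]
    exact S.zero_mem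
  have hnpos : 0 < n := i₀.pos
  have hlam : lam ≠ 0 := by
    rintro rfl
    omega
  have hmem : ∀ x : Fin n × GaloisField p e, (fun k => H x.1 k + x.2) ∈ S := by
    intro x
    have hx : (fun k => H x.1 k + x.2) ∈ ghCode H := ⟨x.1, x.2, rfl⟩
    rwa [hS] at hx
  let f : Fin n × GaloisField p e → S := fun x => ⟨fun k => H x.1 k + x.2, hmem x⟩
  have hf : Function.Bijective f := by
    constructor
    · rintro ⟨i, α⟩ ⟨j, β⟩ hij
      have hfun : ∀ k, H i k + α = H j k + β := fun k => congrFun (Subtype.ext_iff.mp hij) k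
      have hαβ : α = β := by
        have h0 := hfun ⟨0, hnpos⟩
        rwa [hnorm i _ (Or.inr rfl), hnorm j _ (Or.inr rfl), zero_add, zero_add] at h0
      subst hαβ
      by_cases hne : i = j
      · rw [hne]
      · -- Distinct rows take the difference value `1` at `lam ≠ 0` places.
        have hcard := hGH i j hne 1
        have hpos : Nat.card {k : Fin n // H i k - H j k = 1} ≠ 0 := hcard ▸ hlam
        obtain ⟨⟨k, hk⟩⟩ := (Nat.card_ne_zero.mp hpos).1
        rw [add_right_cancel (hfun k), sub_self] at hk
        exact absurd hk zero_ne_one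
    · rintro ⟨v, hv⟩
      have hv' : v ∈ ghCode H := by
        rw [hS]
        exact hv
      obtain ⟨i, α, rfl⟩ := hv'
      exact ⟨(i, α), rfl⟩
  have hcardS : Nat.card S = n * Nat.card (GaloisField p e) := by
    rw [← Nat.card_eq_of_bijective f hf, Nat.card_prod, Nat.card_fin]
  have hpow : Nat.card S = p ^ Module.finrank (ZMod p) S := by
    rw [Module.natCard_eq_pow_finrank (K := ZMod p), Nat.card_zmod]
  have hdvd : s ∣ p ^ Module.finrank (ZMod p) S := by
    rw [← hpow, hcardS, hts]
    exact Dvd.dvd.mul_right (Dvd.intro_left _ rfl) _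
  exact Nat.Coprime.eq_one_of_dvd (Nat.Coprime.pow_right _ (Nat.Coprime.symm hcop)) hdvd
end

section
/- Let p be a prime, e > 1, q = p^e, and let H be a normalized generalized Hadamard matrix H(q,λ) over F_q of order n = qλ, with n = p^t·s and gcd(p,s) = 1. Then the GH code C_H is F_p-additive if and only if both the F_p-dimension of the F_p-linear span of C_H and the F_p-dimension of the p-kernel K_p(C_H) equal e + t. (In the paper's normalization, where the F_p-dimension is divided by e, this reads rank_p(C_H) = ker_p(C_H) = 1 + t/e.) -/
/-!
Write `C` for the code and `K` for its `p`-kernel. As `0 ∈ C`, the set `K` is an `F_p`-subspace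
contained in `C`, so `K ⊆ C ⊆ ⟨C⟩`. If `K` and `⟨C⟩` have the same dimension then all three
coincide, and `C` is additive.

Conversely, an additive `C` equals both its span and its `p`-kernel, so only its dimension is
needed. The pairs (row, constant) parametrise `C` injectively (`ghCode_param_injective`), so `C` has
`p ^ e * n = p ^ (e + t) * s` elements. This is a power of `p` and `s` is prime to `p`, hence
`s = 1` and the dimension is `e + t`.
-/


open scoped BigOperators

/-- The `p`-kernel of `C`, as a subspace: it is the stabilizer of `C` under translation. -/
noncomputable def pkerSubmodule (p : ℕ) [Fact p.Prime] {e : ℕ} {ι : Type*}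
    (C : Set (ι → GaloisField p e)) : Submodule (ZMod p) (ι → GaloisField p e) :=
  AddSubgroup.toZModSubmodule p
    (open scoped Pointwise in AddAction.stabilizer (ι → GaloisField p e) C)

theorem coe_pkerSubmodule (p : ℕ) [Fact p.Prime] {e : ℕ} {ι : Type*}
    (C : Set (ι → GaloisField p e)) : (pkerSubmodule p C : Set _) = pkerSet C := rfl

theorem pkerSet_subset {ι F : Type*} [Field F] {C : Set (ι → F)} (h0 : 0 ∈ C) :
    pkerSet C ⊆ C := by
  intro x hx
  have hx' : (fun c => x + c) '' C = C := hx
  rw [← hx']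
  exact ⟨0, h0, add_zero x⟩

theorem pkerSet_submodule {ι R F : Type*} [Field F] [Ring R] [Module R F]
    (S : Submodule R (ι → F)) : pkerSet (S : Set (ι → F)) = S := by
  apply Set.Subset.antisymm (pkerSet_subset S.zero_mem)
  intro x hx
  ext y
  constructor
  · rintro ⟨c, hc, rfl⟩
    exact S.add_mem hx hc
  · intro hy
    exact ⟨y - x, S.sub_mem hy hx, add_sub_cancel x y⟩

/-- The zero first column recovers the constant, and distinct rows differ somewhere because the
difference `1` is attained `lam > 0` times. -/
theorem ghCode_param_injective {n lam : ℕ} {F : Type*} [Field F] (hn : 0 < n) (hlam : 0 < lam)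
    {H : Matrix (Fin n) (Fin n) F} (hGH : IsGH lam H) (hnorm : IsNormalized H) :
    Function.Injective (fun x : Fin n × F => fun s => H x.1 s + x.2) := by
  rintro ⟨i, α⟩ ⟨j, β⟩ h
  have hs : ∀ s, H i s + α = H j s + β := fun s => congrFun h s
  have hαβ : α = β := by
    have h0 := hs ⟨0, hn⟩
    rwa [hnorm i ⟨0, hn⟩ (Or.inr rfl), hnorm j ⟨0, hn⟩ (Or.inr rfl), zero_add, zero_add] at h0
  subst hαβ
  have hij : i = j := by
    by_contra hne
    have hc := hGH i j hne 1
    have : IsEmpty {s : Fin n // H i s - H j s = 1} :=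
      ⟨fun s => by
        have := s.2
        rw [add_right_cancel (hs s.1), sub_self] at this
        exact zero_ne_one this⟩
    rw [Nat.card_of_isEmpty] at hc
    omega
  rw [hij]

theorem ghCode_card {n lam : ℕ} {F : Type*} [Field F] (hn : 0 < n) (hlam : 0 < lam)
    {H : Matrix (Fin n) (Fin n) F} (hGH : IsGH lam H) (hnorm : IsNormalized H) :
    Nat.card (ghCode H) = n * Nat.card F := by
  have hr : ghCode H = Set.range (fun x : Fin n × F => fun s => H x.1 s + x.2) := by
    ext v
    simp [ghCode, eq_comm]
  rw [hr, Nat.card_range_of_injective (ghCode_param_injective hn hlam hGH hnorm), Nat.card_prod,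
    Nat.card_fin]

theorem stmt2 (p e lam n t s : ℕ) [Fact p.Prime] (he : 1 < e)
    (hn : n = p ^ e * lam) (hts : n = p ^ t * s) (hcop : Nat.gcd p s = 1)
    (H : Matrix (Fin n) (Fin n) (GaloisField p e))
    (hGH : IsGH lam H) (hnorm : IsNormalized H) :
    IsFpAdditive p (ghCode H) ↔
      Module.finrank (ZMod p) (Submodule.span (ZMod p) (ghCode H)) = e + t ∧
      Module.finrank (ZMod p) (Submodule.span (ZMod p) (pkerSet (ghCode H))) = e + t := by
  have hp : p.Prime := Fact.out
  have hn0 : 0 < n := by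
    -- `n = 0` would force `s = 0`, contradicting `gcd p s = 1`.
    rcases Nat.eq_zero_or_pos s with rfl | hs
    · rw [Nat.gcd_zero_right] at hcop
      exact absurd hcop hp.ne_one
    · rw [hts]
      exact Nat.mul_pos (pow_pos hp.pos t) hs
  have hlam : 0 < lam := Nat.pos_of_ne_zero (by rintro rfl; simp at hn; omega)
  constructor
  · rintro ⟨S, hS⟩
    have hcard := ghCode_card hn0 hlam hGH hnorm
    rw [hS, GaloisField.card p e (by omega)] at hcard
    have hpow : Nat.card S = p ^ Module.finrank (ZMod p) S := by
      rw [Module.natCard_eq_pow_finrank (K := ZMod p), Nat.card_zmod]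
    have heq : p ^ Module.finrank (ZMod p) S = p ^ (e + t) * s := by
      rw [← hpow]
      refine hcard.trans ?_
      rw [hts]
      ring
    have hs1 : s = 1 := by
      have hdvd : s ∣ p ^ Module.finrank (ZMod p) S := heq ▸ Dvd.intro_left _ rfl
      have hco : Nat.Coprime s (p ^ Module.finrank (ZMod p) S) :=
        Nat.Coprime.pow_right _ (Nat.Coprime.symm hcop)
      exact Nat.Coprime.eq_one_of_dvd hco hdvd
    have hdim : Module.finrank (ZMod p) S = e + t := by
      rw [hs1, mul_one] at heq
      exact Nat.pow_right_injective hp.two_le heq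
    rw [hS, pkerSet_submodule, Submodule.span_eq]
    exact ⟨hdim, hdim⟩
  · rintro ⟨hrank, hker⟩
    have h0 : (0 : Fin n → GaloisField p e) ∈ ghCode H := by
      refine ⟨⟨0, hn0⟩, 0, ?_⟩
      funext s
      simp [hnorm ⟨0, hn0⟩ s (Or.inl rfl)]
    rw [← coe_pkerSubmodule, Submodule.span_eq] at hker
    have hsub : (pkerSubmodule p (ghCode H) : Set _) ⊆ ghCode H := by
      rw [coe_pkerSubmodule]
      exact pkerSet_subset h0
    have hle : pkerSubmodule p (ghCode H) ≤ Submodule.span (ZMod p) (ghCode H) :=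
      fun x hx => Submodule.subset_span (hsub hx)
    have heq := Submodule.eq_of_le_of_finrank_eq hle (hker.trans hrank.symm)
    refine ⟨pkerSubmodule p (ghCode H), Set.Subset.antisymm ?_ hsub⟩
    rw [heq]
    exact Submodule.subset_span
end

section
/- Let p be a prime, e > 1, q = p^e, and let H be a normalized generalized Hadamard matrix H(q,λ) over F_q of order n = qλ = p^t such that C_H is F_p-additive. If ker(C_H) = k, then (e−1)·rank(C_H) ≥ e + t − k and rank(C_H) ≤ 1 + t − (e−1)(k−1). -/
/-!
Write `q = p ^ e`, `C` for the code, `K` for its kernel, `k` and `r` for kernel dimension and rank.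
Distinct rows of `H` do not differ by a constant, so `|C| = n q` and `dim_{F_p} C = t + e`
(`card_ghCode`). Since `C` is an additive group containing `0`, `K` is the largest `F_q`-subspace
inside `C` (`mem_kerSet_iff`), and both bounds are linear algebra over the extension `F_q / F_p`.

* Upper bound (`finrank_span_le`): an `F_p`-complement `T` of `K` in `C` has dimension
  `t + e - e k`, and the `F_q`-span of `C` is the sum of `K` and the `F_q`-span of `T`.
* Lower bound (`finrank_add_le`): on the `F_q`-span `V` of `C`, the subspace `K` is the kernel of the
  `F_p`-linear map `V → Hom_{F_p}(F_q, V / C)`, `x ↦ (α ↦ α x mod C)`. Its target has `F_p`-dimension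
  `e (e r - (t + e))`; dividing rank-nullity by `e` gives `r ≤ k + e r - (t + e)`.
-/

open scoped BigOperators

section LinearAlgebra

variable {k F M : Type*} [Field k] [Field F] [Algebra k F] [FiniteDimensional k F]
  [AddCommGroup M] [Module k M] [Module F M] [IsScalarTower k F M] [Module.Finite F M]

/-- The largest `F`-subspace `K` contained in a `k`-subspace `S` has `F`-codimension at most the
`k`-codimension of `S`. -/
theorem finrank_add_le (S : Submodule k M) (K : Submodule F M)
    (hK : ∀ x, x ∈ K ↔ ∀ α : F, α • x ∈ S) :
    Module.finrank F M + Module.finrank k S ≤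
      Module.finrank F K + Module.finrank k F * Module.finrank F M := by
  have : Module.Finite k M := Module.Finite.trans F M
  let f : M →ₗ[k] (F →ₗ[k] (M ⧸ S)) :=
    { toFun := fun x => S.mkQ ∘ₗ ((LinearMap.toSpanSingleton F M x).restrictScalars k)
      map_add' := fun x y => by ext α; simp
      map_smul' := fun c x => by
        ext α
        simp [smul_comm α c x] }
  have hker : LinearMap.ker f = K.restrictScalars k := by
    ext x
    rw [LinearMap.mem_ker, Submodule.restrictScalars_mem, hK, LinearMap.ext_iff]
    simp [f]
  have h1 := LinearMap.finrank_range_add_finrank_ker f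
  have h2 := Submodule.finrank_le (LinearMap.range f)
  rw [Module.finrank_linearMap] at h2
  have h3 := Submodule.finrank_quotient_add_finrank S
  have h4 := Module.finrank_mul_finrank k F M
  have h5 : Module.finrank k F * Module.finrank F K = Module.finrank k (K.restrictScalars k) :=
    Module.finrank_mul_finrank k F K
  rw [hker, ← h5, ← h4] at h1
  rw [← h4] at h3
  have hpos : 0 < Module.finrank k F := Module.finrank_pos
  have h6 : Module.finrank F M ≤ Module.finrank k (M ⧸ S) + Module.finrank F K := by
    apply Nat.le_of_mul_le_mul_left _ hpos
    rw [mul_add]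
    omega
  omega

/-- Adjoining a `k`-complement of `K` in `S` to `K` already spans everything `S` spans over `F`. -/
theorem finrank_span_le (S : Submodule k M) (K : Submodule F M)
    (hK : K.restrictScalars k ≤ S) :
    Module.finrank F (Submodule.span F (S : Set M)) + Module.finrank k F * Module.finrank F K ≤
      Module.finrank F K + Module.finrank k S := by
  have : Module.Finite k M := Module.Finite.trans F M
  obtain ⟨Q, hQ⟩ := Submodule.exists_isCompl (K.restrictScalars k)
  set T := S ⊓ Q with hT
  have hsup : K.restrictScalars k ⊔ T = S := by
    rw [hT, inf_comm, ← sup_inf_assoc_of_le Q hK, hQ.sup_eq_top, top_inf_eq]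
  have hinf : K.restrictScalars k ⊓ T = ⊥ := by
    rw [eq_bot_iff, ← hQ.inf_eq_bot]
    exact inf_le_inf_left _ inf_le_right
  have h1 := Submodule.finrank_sup_add_finrank_inf_eq (K.restrictScalars k) T
  rw [hsup, hinf, finrank_bot] at h1
  have h5 : Module.finrank k F * Module.finrank F K = Module.finrank k (K.restrictScalars k) :=
    Module.finrank_mul_finrank k F K
  have hspan : Submodule.span F (S : Set M) ≤ K ⊔ Submodule.span F (T : Set M) := by
    rw [Submodule.span_le]
    intro x hx
    rw [← hsup] at hx
    obtain ⟨y, hy, z, hz, rfl⟩ := Submodule.mem_sup.1 hx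
    exact Submodule.add_mem_sup hy (Submodule.subset_span hz)
  have hTle : Module.finrank F (Submodule.span F (T : Set M)) ≤ Module.finrank k T := by
    let b := Module.finBasis k T
    have hle : Submodule.span F (T : Set M) ≤
        Submodule.span F (Set.range fun i => (b i : M)) := by
      rw [Submodule.span_le]
      intro x hx
      have hb := b.sum_repr ⟨x, hx⟩
      have hx' : x = ∑ i, b.repr ⟨x, hx⟩ i • (b i : M) := by
        have h := congrArg T.subtype hb
        rw [map_sum] at h
        exact h.symm
      rw [hx']
      refine Submodule.sum_mem _ fun i _ => ?_
      rw [← algebraMap_smul F]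
      exact Submodule.smul_mem _ _ (Submodule.subset_span ⟨i, rfl⟩)
    refine (Submodule.finrank_mono hle).trans ?_
    exact (finrank_range_le_card (R := F) (fun i => (b i : M))).trans (Fintype.card_fin _).le
  have h7 := Submodule.finrank_mono hspan
  have h8 := Submodule.finrank_add_le_finrank_add_finrank K (Submodule.span F (T : Set M))
  omega

/-- `finrank_add_le` relative to the `F`-span of `S` instead of the ambient space. -/
theorem finrank_span_add_le (S : Submodule k M) (K : Submodule F M)
    (hK : ∀ x, x ∈ K ↔ ∀ α : F, α • x ∈ S) :
    Module.finrank F (Submodule.span F (S : Set M)) + Module.finrank k S ≤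
      Module.finrank F K +
        Module.finrank k F * Module.finrank F (Submodule.span F (S : Set M)) := by
  set V := Submodule.span F (S : Set M) with hV
  have hSV : S ≤ V.restrictScalars k := fun x hx => Submodule.subset_span hx
  have hKV : K ≤ V := fun x hx => hSV (by simpa using (hK x).1 hx 1)
  let S' : Submodule k V := S.comap (V.subtype.restrictScalars k)
  have h := finrank_add_le S' (K.comap V.subtype) (fun x => by
    rw [Submodule.mem_comap, hK]; rfl)
  have e1 : Module.finrank k S' = Module.finrank k S :=
    (Submodule.comapSubtypeEquivOfLe hSV).finrank_eq
  have e2 : Module.finrank F (K.comap V.subtype) = Module.finrank F K :=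
    (Submodule.comapSubtypeEquivOfLe hKV).finrank_eq
  rwa [e1, e2] at h

end LinearAlgebra

theorem mem_kerSet_iff {ι k F : Type*} [Field k] [Field F] [Algebra k F]
    (S : Submodule k (ι → F)) (x : ι → F) :
    x ∈ kerSet (S : Set (ι → F)) ↔ ∀ α : F, α • x ∈ S := by
  constructor
  · intro hx α
    have h : α • x + 0 ∈ (fun c => α • x + c) '' (S : Set (ι → F)) := ⟨0, S.zero_mem, rfl⟩
    rw [hx α] at h
    simpa using h
  · intro hx α
    ext y
    constructor
    · rintro ⟨c, hc, rfl⟩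
      exact S.add_mem (hx α) hc
    · intro hy
      exact ⟨y - α • x, S.sub_mem hy (hx α), by simp⟩

/-- Rows and translations are recovered from the codewords: `H i = H j + c` with `i ≠ j` would make
the value `c` occur `n` times among the differences, and every other value zero times. -/
theorem card_ghCode {n lam : ℕ} {F : Type*} [Field F] (hn : 0 < n)
    (H : Matrix (Fin n) (Fin n) F) (hGH : IsGH lam H) :
    Nat.card (ghCode H) = n * Nat.card F := by
  have hinj : Function.Injective (fun x : Fin n × F => fun s => H x.1 s + x.2) := by
    rintro ⟨i, α⟩ ⟨j, β⟩ h
    have h' : ∀ s, H i s + α = H j s + β := fun s => congrFun h s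
    by_cases hij : i = j
    · subst hij
      have := add_left_cancel (h' ⟨0, hn⟩)
      rw [this]
    · exfalso
      have hd : ∀ s, H i s - H j s = β - α := fun s => by
        linear_combination h' s
      have h1 := hGH i j hij (β - α)
      have h2 := hGH i j hij (β - α + 1)
      simp only [hd] at h1 h2
      simp at h1 h2
      omega
  have hr : ghCode H = Set.range (fun x : Fin n × F => fun s => H x.1 s + x.2) := by
    ext v
    simp [ghCode, eq_comm]
  rw [hr, ← Nat.card_congr (Equiv.ofInjective _ hinj), Nat.card_prod, Nat.card_fin]

theorem stmt3 (p e lam n t k : ℕ) [Fact p.Prime] (he : 1 < e)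
    (hn : n = p ^ e * lam) (hnt : n = p ^ t)
    (H : Matrix (Fin n) (Fin n) (GaloisField p e))
    (hGH : IsGH lam H) (hnorm : IsNormalized H)
    (hadd : IsFpAdditive p (ghCode H))
    (hk : kerDim (GaloisField p e) (ghCode H) = k) :
    (e : ℤ) + t - k ≤ ((e : ℤ) - 1) * rankC (GaloisField p e) (ghCode H) ∧
    (rankC (GaloisField p e) (ghCode H) : ℤ) ≤ 1 + t - ((e : ℤ) - 1) * ((k : ℤ) - 1) := by
  have hp : p.Prime := Fact.out
  obtain ⟨S, hS⟩ := hadd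
  have hn0 : 0 < n := hnt ▸ pow_pos hp.pos t
  have he0 : e ≠ 0 := by omega
  have hcard := card_ghCode hn0 H hGH
  rw [hS, GaloisField.card p e he0] at hcard
  replace hcard : _ = p ^ (t + e) := hcard.trans (by rw [pow_add, ← hnt])
  have hdim : Module.finrank (ZMod p) S = t + e := by
    have h := Module.natCard_eq_pow_finrank (K := ZMod p) (V := S)
    rw [Nat.card_zmod] at h
    exact Nat.pow_right_injective hp.two_le (h.symm.trans hcard)
  let K : Submodule (GaloisField p e) (Fin n → GaloisField p e) :=
    { carrier := kerSet (ghCode H)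
      zero_mem' := by rw [hS, mem_kerSet_iff]; simp
      add_mem' := by
        intro x y hx hy
        rw [hS, mem_kerSet_iff] at *
        intro α
        rw [smul_add]
        exact S.add_mem (hx α) (hy α)
      smul_mem' := by
        intro c x hx
        rw [hS, mem_kerSet_iff] at *
        intro α
        rw [smul_smul]
        exact hx _ }
  have hK : ∀ x, x ∈ K ↔ ∀ α : GaloisField p e, α • x ∈ S := fun x => by
    rw [← mem_kerSet_iff, ← hS]; rfl
  have hKdim : Module.finrank (GaloisField p e) K = k := by
    rw [← hk, kerDim, show kerSet (ghCode H) = (K : Set _) from rfl, Submodule.span_eq]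
  have hlow := finrank_span_add_le S K hK
  have hup := finrank_span_le S K (fun x hx => by simpa using (hK x).1 hx 1)
  rw [hKdim, hdim, GaloisField.finrank p he0] at hlow hup
  rw [rankC, hS]
  zify at hlow hup
  constructor
  · linarith
  · linarith
end

section
/- Let p be a prime and q = p². Let H be a normalized generalized Hadamard matrix H(q,λ) over F_q such that C_H is an F_p-additive code of length n = qλ = p^t. Then: (i) rank(C_H) + ker(C_H) = 2 + t; (ii) if t is odd, then rank(C_H) − ker(C_H) ≥ 3; (iii) if t is even and C_H is not linear over F_q, then rank(C_H) − ker(C_H) ≥ 2. -/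
/-!
Write `F = 𝔽_{p²}`, let `S` be the code seen as an `𝔽_p`-space, and let `K ⊆ S` be its kernel, the
largest `F`-subspace contained in `S`. Choose `ω ∈ F \ 𝔽_p`, so that every element of `F` has the
form `a + b ω` with `a, b ∈ 𝔽_p`. Then `K = S ∩ ωS` and the `F`-span of `S` is `S + ωS`, so the
dimension formula over `𝔽_p` gives `2 rank + 2 ker = 2 dim S` (`finrank_span_add_finrank_kernel`).
Since `|S| = p² n`, `dim S = t + 2`, which is (i). As `K ⊆ span S`, with equality only if `S = K`
is linear, (iii) follows by parity, and (ii) is reduced to excluding `rank = ker + 1`.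

In that case `K` has `𝔽_p`-codimension one in `S`. Counting the pairs `(i, s)` with
`H i s = H i s₀` along rows and along columns shows that for `s ≠ s₀` exactly `λ` rows agree in the
columns `s` and `s₀` (`card_rows_agree`), so the words of `S` with `c s = c s₀` form a subspace of
codimension two (`finrank_agree`). This subspace therefore cannot contain `K`, i.e. `K` separates
the coordinates. But then the functionals `x ↦ x s + a x s₀` on `K` are pairwise distinct for
`(s, a)` in `Fin n × F` (the constant vectors lie in `K` and determine `a`), so
`|S| = n p² ≤ |K| = |S| / p`, a contradiction.
-/


open scoped BigOperators

/-! ### Rank and kernel of an additive code over a quadratic extension -/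

section Additive

variable {k F V : Type*} [Field k] [Field F] [Algebra k F] [AddCommGroup V] [Module F V]
  [Module k V] [IsScalarTower k F V]

/-- The largest `F`-subspace contained in the `k`-subspace `S`. -/
def kernelSub (F : Type*) [Field F] [Algebra k F] [Module F V] [IsScalarTower k F V]
    (S : Submodule k V) : Submodule F V where
  carrier := {x | ∀ α : F, α • x ∈ S}
  add_mem' := fun {x y} hx hy α => by rw [smul_add]; exact S.add_mem (hx α) (hy α)
  zero_mem' := fun α => by simp
  smul_mem' := fun c x hx α => by rw [smul_smul]; exact hx _

lemma mem_kernelSub {S : Submodule k V} {x : V} :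
    x ∈ kernelSub F S ↔ ∀ α : F, α • x ∈ S := Iff.rfl

lemma kernelSub_le (S : Submodule k V) {x : V} (hx : x ∈ kernelSub F S) : x ∈ S := by
  simpa using hx 1

lemma exists_eq_add_mul (h2 : Module.finrank k F = 2) {w : F}
    (hw : ∀ a : k, algebraMap k F a ≠ w) (α : F) :
    ∃ a b : k, α = algebraMap k F a + algebraMap k F b * w := by
  have hli : LinearIndependent k ![(1 : F), w] := by
    rw [LinearIndependent.pair_iff' one_ne_zero]
    intro a ha
    exact hw a (by rw [← ha, Algebra.smul_def, mul_one])
  have htop := hli.span_eq_top_of_card_eq_finrank (by simp [h2])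
  have hα : α ∈ Submodule.span k (Set.range ![(1 : F), w]) := by rw [htop]; trivial
  rw [Matrix.range_cons, Matrix.range_cons, Matrix.range_empty, Set.union_empty,
    Set.singleton_union, Submodule.mem_span_pair] at hα
  obtain ⟨a, b, h⟩ := hα
  exact ⟨a, b, by rw [← h, Algebra.smul_def, Algebra.smul_def, mul_one]⟩

lemma exists_not_algebraMap (h2 : Module.finrank k F = 2) :
    ∃ w : F, ∀ a : k, algebraMap k F a ≠ w := by
  by_contra! h
  have hle : Module.finrank k F ≤ 1 :=
    finrank_le_one (1 : F) (fun w => by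
      obtain ⟨a, ha⟩ := h w
      exact ⟨a, by rw [Algebra.smul_def, mul_one, ha]⟩)
  omega

theorem finrank_span_add_finrank_kernel [Module.Finite k V] (h2 : Module.finrank k F = 2)
    (S : Submodule k V) :
    Module.finrank F (Submodule.span F (S : Set V)) + Module.finrank F (kernelSub F S)
      = Module.finrank k S := by
  obtain ⟨w, hw⟩ := exists_not_algebraMap (k := k) (F := F) h2
  have hw0 : w ≠ 0 := fun h => hw 0 (by simp [h])
  have hwi : ∀ a : k, algebraMap k F a ≠ w⁻¹ := fun a h => hw a⁻¹ (by simp [h])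
  let f : V ≃ₗ[k] V := (LinearEquiv.smulOfNeZero F V w hw0).restrictScalars k
  have hf : ∀ x, f x = w • x := fun x => rfl
  let W : Submodule k V := S.map (f : V →ₗ[k] V)
  have hsmul : ∀ (a : k) (x : V), algebraMap k F a • x = a • x :=
    fun a x => algebraMap_smul F a x
  have hsup : S ⊔ W = (Submodule.span F (S : Set V)).restrictScalars k := by
    apply le_antisymm
    · apply sup_le
      · intro x hx
        exact Submodule.subset_span hx
      · rintro _ ⟨x, hx, rfl⟩
        exact Submodule.smul_mem _ w (Submodule.subset_span hx)
    · intro x hx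
      rw [Submodule.restrictScalars_mem] at hx
      refine Submodule.closure_induction (p := fun x _ => x ∈ S ⊔ W) ?_ ?_ ?_ hx
      · exact Submodule.zero_mem _
      · intro x y _ _ h1 h2
        exact Submodule.add_mem _ h1 h2
      · intro α x hx
        obtain ⟨a, b, rfl⟩ := exists_eq_add_mul h2 hw α
        rw [add_smul, mul_smul, hsmul, hsmul]
        exact Submodule.add_mem_sup (S.smul_mem a hx)
          (W.smul_mem b (Submodule.mem_map_of_mem (f := (f : V →ₗ[k] V)) hx))
  have hinf : S ⊓ W = (kernelSub F S).restrictScalars k := by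
    ext x
    rw [Submodule.restrictScalars_mem, mem_kernelSub]
    constructor
    · rintro ⟨hx, y, hy, hyx⟩ α
      have hy' : w⁻¹ • x = y := by
        rw [← hyx]
        change w⁻¹ • (w • y) = y
        rw [smul_smul, inv_mul_cancel₀ hw0, one_smul]
      obtain ⟨a, b, rfl⟩ := exists_eq_add_mul h2 hwi α
      rw [add_smul, mul_smul, hsmul, hsmul, hy']
      exact S.add_mem (S.smul_mem a hx) (S.smul_mem b hy)
    · intro h
      refine ⟨by simpa using h 1, w⁻¹ • x, h _, ?_⟩
      change w • (w⁻¹ • x) = x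
      rw [smul_smul, mul_inv_cancel₀ hw0, one_smul]
  have hW : Module.finrank k W = Module.finrank k S := LinearEquiv.finrank_map_eq f S
  have key := Submodule.finrank_sup_add_finrank_inf_eq S W
  have e1 := Module.finrank_mul_finrank k F (Submodule.span F (S : Set V))
  have e2 := Module.finrank_mul_finrank k F (kernelSub F S)
  have e1' : Module.finrank k ((Submodule.span F (S : Set V)).restrictScalars k)
      = Module.finrank k (Submodule.span F (S : Set V)) := rfl
  have e2' : Module.finrank k ((kernelSub F S).restrictScalars k)
      = Module.finrank k (kernelSub F S) := rfl
  rw [hsup, hinf, hW] at key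
  rw [h2] at e1 e2
  omega

end Additive

lemma kerSet_coe {k F ι : Type*} [Field k] [Field F] [Algebra k F] (S : Submodule k (ι → F)) :
    kerSet (S : Set (ι → F)) = (kernelSub F S : Set (ι → F)) := by
  ext x
  constructor
  · intro h α
    have h0 : α • x + 0 ∈ (fun c => α • x + c) '' (S : Set (ι → F)) := ⟨0, S.zero_mem, rfl⟩
    rw [h α, add_zero] at h0
    exact h0
  · intro h α
    apply Set.Subset.antisymm
    · rintro _ ⟨c, hc, rfl⟩
      exact S.add_mem (h α) hc
    · intro c hc
      exact ⟨c - α • x, S.sub_mem hc (h α), by simp⟩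

/-! ### Counting in generalised Hadamard matrices -/

section GH

variable {n lam : ℕ} {F : Type*} [Field F] {H : Matrix (Fin n) (Fin n) F}

/-- Two words `h_i + α`, `h_j + β` are distinct for distinct `(i, α)`, `(j, β)`: otherwise the
difference of two rows would be constant, i.e. take one value `n > λ` times. -/
lemma ghWord_injective (hGH : IsGH lam H) (hlt : lam < n) :
    Function.Injective (fun x : Fin n × F => fun s => H x.1 s + x.2) := by
  rintro ⟨i, α⟩ ⟨j, β⟩ h
  have h' : ∀ s, H i s + α = H j s + β := fun s => congrFun h s
  by_cases hij : i = j
  · subst hij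
    have := h' ⟨0, by omega⟩
    simpa using this
  · exfalso
    have hc := hGH i j hij (β - α)
    have hall : ∀ s, H i s - H j s = β - α := fun s => by linear_combination h' s
    rw [Nat.card_congr (Equiv.subtypeUnivEquiv hall), Nat.card_fin] at hc
    omega

/-- If every column agrees with column `s₀` in at least `lam` rows, then every other column agrees
with it in exactly `lam` rows, by counting the pairs `(i, s)` with `H i s = H i s₀` in two ways. -/
lemma card_rows_agree [DecidableEq F] (hGH : IsGH lam H) (hnorm : IsNormalized H)
    (s₀ : Fin n)
    (hge : ∀ s, lam ≤ (Finset.univ.filter fun i => H i s = H i s₀).card)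
    (s : Fin n) (hs : s ≠ s₀) :
    (Finset.univ.filter fun i => H i s = H i s₀).card = lam := by
  have hn : 0 < n := s₀.pos
  let z : Fin n := ⟨0, hn⟩
  have hcount : ∑ s, (Finset.univ.filter fun i => H i s = H i s₀).card
      = ∑ i, (Finset.univ.filter fun s => H i s = H i s₀).card := by
    simp only [Finset.card_filter]
    exact Finset.sum_comm
  have hrow : ∀ i ∈ Finset.univ.erase z,
      (Finset.univ.filter fun s => H i s = H i s₀).card = lam := by
    intro i hi
    have hiz : i ≠ z := Finset.ne_of_mem_erase hi
    have hc := hGH i z hiz (H i s₀)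
    have hz : ∀ s, H z s = 0 := fun s => hnorm z s (Or.inl rfl)
    simp only [hz, sub_zero] at hc
    rw [Nat.card_eq_fintype_card, Fintype.card_subtype] at hc
    exact hc
  have hrow0 : (Finset.univ.filter fun s => H z s = H z s₀).card = n := by
    have hz : ∀ s, H z s = 0 := fun s => hnorm z s (Or.inl rfl)
    simp [hz]
  have hcol0 : (Finset.univ.filter fun i => H i s₀ = H i s₀).card = n := by simp
  rw [← Finset.add_sum_erase _ _ (Finset.mem_univ s₀),
    ← Finset.add_sum_erase _ _ (Finset.mem_univ z), hcol0, hrow0,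
    Finset.sum_congr rfl hrow] at hcount
  have hsum : ∑ s ∈ Finset.univ.erase s₀, lam
      = ∑ s ∈ Finset.univ.erase s₀, (Finset.univ.filter fun i => H i s = H i s₀).card := by
    have hc := Nat.add_left_cancel hcount
    rw [hc]
    simp [Finset.card_erase_of_mem]
  exact (((Finset.sum_eq_sum_iff_of_le (fun s _ => hge s)).1 hsum) s
    (Finset.mem_erase.2 ⟨hs, Finset.mem_univ s⟩)).symm

end GH

/-! ### The additive case -/

section AdditiveGH

variable {p n lam t : ℕ} [Fact p.Prime] {H : Matrix (Fin n) (Fin n) (GaloisField p 2)}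
  {S : Submodule (ZMod p) (Fin n → GaloisField p 2)}

/-- The map `c ↦ c s - c s₀` on a code. -/
noncomputable def diffMap (S : Submodule (ZMod p) (Fin n → GaloisField p 2)) (s s₀ : Fin n) :
    S →ₗ[ZMod p] GaloisField p 2 :=
  ((LinearMap.proj s : (Fin n → GaloisField p 2) →ₗ[ZMod p] GaloisField p 2)
    - (LinearMap.proj s₀ : (Fin n → GaloisField p 2) →ₗ[ZMod p] GaloisField p 2)).comp S.subtype

lemma diffMap_apply (s s₀ : Fin n) (c : S) : diffMap S s s₀ c = c.1 s - c.1 s₀ := rfl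

/-- The code is parametrised by a row and an additive constant. -/
noncomputable def wordEquiv (hGH : IsGH lam H) (hlt : lam < n) (hS : ghCode H = S) :
    (Fin n × GaloisField p 2) ≃ S :=
  (Equiv.ofInjective _ (ghWord_injective hGH hlt)).trans (Equiv.setCongr (by
    rw [← hS]
    ext v
    simp [ghCode, eq_comm]))

lemma wordEquiv_apply (hGH : IsGH lam H) (hlt : lam < n) (hS : ghCode H = S)
    (x : Fin n × GaloisField p 2) (s : Fin n) :
    (wordEquiv hGH hlt hS x).1 s = H x.1 s + x.2 := rfl

lemma card_galois : Nat.card (GaloisField p 2) = p ^ 2 := GaloisField.card p 2 two_ne_zero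

lemma natCard_eq_pow (M : Type*) [AddCommGroup M] [Module (ZMod p) M] [Module.Finite (ZMod p) M] :
    Nat.card M = p ^ Module.finrank (ZMod p) M := by
  rw [Module.natCard_eq_pow_finrank (K := ZMod p), Nat.card_zmod]

lemma finrank_code (hGH : IsGH lam H) (hlt : lam < n) (hS : ghCode H = S) (hnt : n = p ^ t) :
    Module.finrank (ZMod p) S = t + 2 := by
  have hp : p.Prime := Fact.out
  have h1 := natCard_eq_pow (p := p) S
  rw [← Nat.card_congr (wordEquiv hGH hlt hS), Nat.card_prod, card_galois, Nat.card_fin] at h1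
  refine (Nat.pow_right_injective hp.two_le ?_).symm
  change p ^ (t + 2) = p ^ Module.finrank (ZMod p) S
  rw [← h1, pow_add, ← hnt]

open Classical in
lemma card_ker_diffMap (hGH : IsGH lam H) (hlt : lam < n) (hS : ghCode H = S) (s s₀ : Fin n) :
    Nat.card (LinearMap.ker (diffMap S s s₀))
      = (Finset.univ.filter fun i => H i s = H i s₀).card * p ^ 2 := by
  let e := wordEquiv hGH hlt hS
  have e1 : {x : Fin n × GaloisField p 2 // H x.1 s = H x.1 s₀}
      ≃ LinearMap.ker (diffMap S s s₀) :=
    e.subtypeEquiv (fun x => by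
      rw [LinearMap.mem_ker, diffMap_apply, wordEquiv_apply, wordEquiv_apply]
      constructor
      · intro h; rw [h, sub_self]
      · intro h; linear_combination h)
  have e2 : {x : Fin n × GaloisField p 2 // H x.1 s = H x.1 s₀}
      ≃ {i : Fin n // H i s = H i s₀} × GaloisField p 2 :=
    { toFun := fun x => (⟨x.1.1, x.2⟩, x.1.2)
      invFun := fun y => ⟨(y.1.1, y.2), y.1.2⟩
      left_inv := fun _ => rfl
      right_inv := fun _ => rfl }
  rw [← Nat.card_congr e1, Nat.card_congr e2, Nat.card_prod, card_galois,
    Nat.card_eq_fintype_card, Fintype.card_subtype]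

/-- The words agreeing in two given distinct positions form a subspace of codimension two. -/
lemma finrank_agree (hGH : IsGH lam H) (hnorm : IsNormalized H) (hlt : lam < n)
    (hn : n = p ^ 2 * lam) (hS : ghCode H = S) (hnt : n = p ^ t) (s s₀ : Fin n) (hs : s ≠ s₀) :
    Module.finrank (ZMod p) (LinearMap.ker (diffMap S s s₀)) = t := by
  classical
  have hp : p.Prime := Fact.out
  have hge : ∀ s, lam ≤ (Finset.univ.filter fun i => H i s = H i s₀).card := by
    intro s
    have h1 := LinearMap.finrank_range_add_finrank_ker (diffMap S s s₀)
    have h2 : Module.finrank (ZMod p) (LinearMap.range (diffMap S s s₀)) ≤ 2 := by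
      have h := Submodule.finrank_le (LinearMap.range (diffMap S s s₀))
      rwa [GaloisField.finrank p two_ne_zero] at h
    rw [finrank_code hGH hlt hS hnt] at h1
    have h3 := card_ker_diffMap hGH hlt hS s s₀
    rw [natCard_eq_pow (p := p)] at h3
    have h4 : p ^ t ≤ p ^ Module.finrank (ZMod p) (LinearMap.ker (diffMap S s s₀)) :=
      Nat.pow_le_pow_right hp.pos (by omega)
    rw [h3, ← hnt] at h4
    have h5 := (mul_comm lam (p ^ 2)).trans hn.symm
    exact Nat.le_of_mul_le_mul_right (h5.le.trans h4) (pow_pos hp.pos 2)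
  have h := card_rows_agree hGH hnorm s₀ hge s hs
  have h3 := card_ker_diffMap hGH hlt hS s s₀
  rw [natCard_eq_pow (p := p), h, mul_comm, ← hn] at h3
  exact Nat.pow_right_injective hp.two_le (h3.trans hnt)

/-- A subspace that contains the constant vectors and separates the positions has at least
`n |F|` elements: the functionals `x ↦ x s + a * x s₀` on it are pairwise distinct. -/
lemma card_le_of_separates {F : Type*} [Field F] [Finite F] (K : Submodule F (Fin n → F))
    (h1 : (fun _ => 1 : Fin n → F) ∈ K) (s₀ : Fin n)
    (hsep : ∀ s s', s ≠ s' → ∃ x ∈ K, x s ≠ x s') :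
    n * Nat.card F ≤ Nat.card K := by
  let ev : Fin n → Module.Dual F K := fun s => (LinearMap.proj s).comp K.subtype
  have hev : ∀ s x, ev s x = x.1 s := fun _ _ => rfl
  have hinj : Function.Injective (fun y : Fin n × F => ev y.1 + y.2 • ev s₀) := by
    rintro ⟨s, a⟩ ⟨s', b⟩ h
    have hx : ∀ x : K, x.1 s + a * x.1 s₀ = x.1 s' + b * x.1 s₀ :=
      fun x => LinearMap.congr_fun h x
    have hab : a = b := by simpa using hx ⟨_, h1⟩
    subst hab
    by_contra hne
    obtain ⟨x, hxK, hxne⟩ := hsep s s' (fun h => hne (by rw [h]))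
    exact hxne (by simpa using hx ⟨x, hxK⟩)
  have : Finite (Module.Dual F K) := Module.finite_of_finite F
  have hle := Nat.card_le_card_of_injective _ hinj
  rwa [Nat.card_prod, Nat.card_fin, Module.natCard_eq_pow_finrank (K := F) (V := Module.Dual F K),
    Subspace.dual_finrank_eq, ← Module.natCard_eq_pow_finrank] at hle

/-- The kernel never has `𝔽_p`-codimension one in the code. -/
lemma finrank_code_ne (hGH : IsGH lam H) (hnorm : IsNormalized H) (hlt : lam < n)
    (hn : n = p ^ 2 * lam) (hS : ghCode H = S) (hnt : n = p ^ t) :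
    Module.finrank (ZMod p) S ≠
      2 * Module.finrank (GaloisField p 2) (kernelSub (GaloisField p 2) S) + 1 := by
  have hp : p.Prime := Fact.out
  intro hdim
  set K := kernelSub (GaloisField p 2) S with hK
  have hKp : Module.finrank (ZMod p) K = 2 * Module.finrank (GaloisField p 2) K := by
    have := Module.finrank_mul_finrank (ZMod p) (GaloisField p 2) K
    rw [GaloisField.finrank p two_ne_zero] at this
    exact this.symm
  have hS2 := finrank_code hGH hlt hS hnt
  have hsep : ∀ s s', s ≠ s' → ∃ x ∈ K, x s ≠ x s' := by
    intro s s' hss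
    by_contra! hcon
    let g : K →ₗ[ZMod p] LinearMap.ker (diffMap S s s') :=
      { toFun := fun x => ⟨⟨x.1, kernelSub_le S x.2⟩, by
          rw [LinearMap.mem_ker, diffMap_apply, hcon x.1 x.2, sub_self]⟩
        map_add' := fun _ _ => rfl
        map_smul' := fun _ _ => rfl }
    have hg : Function.Injective g := fun x y hxy =>
      Subtype.ext (congrArg (fun z => z.1.1) hxy)
    have := LinearMap.finrank_le_finrank_of_injective hg
    rw [finrank_agree hGH hnorm hlt hn hS hnt s s' hss] at this
    omega
  have hpos : 0 < n := by omega
  have hone : (fun _ => 1 : Fin n → GaloisField p 2) ∈ K := by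
    intro α
    rw [← SetLike.mem_coe, ← hS]
    refine ⟨⟨0, hpos⟩, α, ?_⟩
    funext s
    rw [hnorm ⟨0, hpos⟩ s (Or.inl rfl)]
    simp
  have hle := card_le_of_separates K hone ⟨0, hpos⟩ hsep
  rw [card_galois, natCard_eq_pow (p := p)] at hle
  have hle2 : p ^ (t + 2) ≤ p ^ Module.finrank (ZMod p) K := by
    rw [pow_add, ← hnt]
    exact hle
  rw [Nat.pow_le_pow_iff_right hp.one_lt] at hle2
  omega

end AdditiveGH

theorem stmt5 (p lam n t : ℕ) [Fact p.Prime]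
    (hn : n = p ^ 2 * lam) (hnt : n = p ^ t)
    (H : Matrix (Fin n) (Fin n) (GaloisField p 2))
    (hGH : IsGH lam H) (hnorm : IsNormalized H)
    (hadd : IsFpAdditive p (ghCode H)) :
    rankC (GaloisField p 2) (ghCode H) + kerDim (GaloisField p 2) (ghCode H) = 2 + t ∧
    (Odd t →
      (3 : ℤ) ≤ (rankC (GaloisField p 2) (ghCode H) : ℤ)
        - (kerDim (GaloisField p 2) (ghCode H) : ℤ)) ∧
    (Even t →
      ¬ (∃ S : Submodule (GaloisField p 2) (Fin n → GaloisField p 2), ghCode H = ↑S) →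
      (2 : ℤ) ≤ (rankC (GaloisField p 2) (ghCode H) : ℤ)
        - (kerDim (GaloisField p 2) (ghCode H) : ℤ)) := by
  have hp : p.Prime := Fact.out
  have hpos : 0 < n := hnt ▸ pow_pos hp.pos t
  have hlt : lam < n := by
    have hl : 0 < lam := Nat.pos_of_ne_zero (by rintro rfl; simp at hn; omega)
    have : 2 ≤ p ^ 2 := hp.two_le.trans (Nat.le_self_pow two_ne_zero p)
    nlinarith
  obtain ⟨S, hS⟩ := hadd
  have h2 : Module.finrank (ZMod p) (GaloisField p 2) = 2 := GaloisField.finrank p two_ne_zero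
  have hdim := finrank_code hGH hlt hS hnt
  have hsum := finrank_span_add_finrank_kernel h2 S
  have hne := finrank_code_ne hGH hnorm hlt hn hS hnt
  have hker : kerDim (GaloisField p 2) (ghCode H)
      = Module.finrank (GaloisField p 2) (kernelSub (GaloisField p 2) S) := by
    rw [kerDim, hS, kerSet_coe, Submodule.span_eq]
  have hrank : rankC (GaloisField p 2) (ghCode H)
      = Module.finrank (GaloisField p 2)
          (Submodule.span (GaloisField p 2) (S : Set (Fin n → GaloisField p 2))) := by
    rw [rankC, hS]
  have hKle : kernelSub (GaloisField p 2) S ≤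
      Submodule.span (GaloisField p 2) (S : Set (Fin n → GaloisField p 2)) :=
    fun x hx => Submodule.subset_span (kernelSub_le S hx)
  have hle := Submodule.finrank_mono hKle
  rw [hker, hrank]
  refine ⟨by omega, fun ht => ?_, fun ht hnl => ?_⟩
  · obtain ⟨m, hm⟩ := ht
    omega
  · obtain ⟨m, hm⟩ := ht
    have hneq : Module.finrank (GaloisField p 2) (kernelSub (GaloisField p 2) S) ≠
        Module.finrank (GaloisField p 2)
          (Submodule.span (GaloisField p 2) (S : Set (Fin n → GaloisField p 2))) := by
      intro heq
      have hKeq := Submodule.eq_of_le_of_finrank_eq hKle heq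
      refine hnl ⟨kernelSub (GaloisField p 2) S, ?_⟩
      rw [hS]
      apply Set.Subset.antisymm
      · rw [hKeq]
        exact Submodule.subset_span
      · exact fun x hx => kernelSub_le S hx
    omega
end

section
/- For every prime p and every e > 1, setting q = p^e, there exists a normalized generalized Hadamard matrix H(p^e, p^e) over F_q (of order q²) such that the GH code C_H is an F_p-additive code of length n = p^{2e} = q² with ker(C_H) = 2 and rank(C_H) = 4. -/
/-!
Write `F = GF(p^e)` and index both rows and columns by `F × F`. The matrix is
`H_{(a,b),(x,y)} = b x + a y + a^p x²`.

The entries are additive in `(a, b)`, so `C_H` is the `F_p`-space of all functions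
`β + b x + a y + a^p x²`, and differences of rows are again rows. A nonzero row takes each value
exactly `q` times: if `a ≠ 0`, solve for `y` given `x`; if `a = 0`, solve for `x` given `y`.

As `e > 1`, some `t ∈ F` satisfies `t^p ≠ t`; in particular `t ≠ 0, 1`, so the functions
`1, x, y, x²` are linearly independent. Comparing the rows `(1, 0)` and `(t, 0)` shows that all four
lie in the span of `C_H`, whence the rank is `4`. A codeword lies in the kernel iff all its
`F`-multiples are codewords; multiplying by `t` forces `t a^p = (t a)^p`, so `a = 0`, and the kernel
is spanned by `1` and `x`.
-/

open scoped BigOperators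

namespace GHConstruction

/-- Frobenius is not the identity on a field with `p ^ e` elements, `e > 1`. -/
lemma exists_pow_ne (p e : ℕ) [Fact p.Prime] (he : 1 < e) :
    ∃ t : GaloisField p e, t ^ p ≠ t := by
  classical
  by_contra! h
  have hp : 1 < p := (Fact.out : p.Prime).one_lt
  have : Fintype (GaloisField p e) := Fintype.ofFinite _
  have hz := Polynomial.eq_zero_of_natDegree_lt_card_of_eval_eq_zero
    (Polynomial.X ^ p - Polynomial.X : Polynomial (GaloisField p e)) (f := id)
    Function.injective_id (fun a => by simp [h a]) (by
      rw [FiniteField.X_pow_card_sub_X_natDegree_eq _ hp, Fintype.card_eq_nat_card,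
        GaloisField.card p e (by omega)]
      calc p = p ^ 1 := (pow_one p).symm
        _ < p ^ e := Nat.pow_lt_pow_right hp he)
  exact FiniteField.X_pow_card_sub_X_ne_zero _ hp hz

variable {F : Type*} [Field F]

/-- The entry `b x + a y + a^p x²` in row `u = (a, b)` and column `v = (x, y)`. -/
def entry (p : ℕ) (u v : F × F) : F := u.2 * v.1 + u.1 * v.2 + u.1 ^ p * v.1 ^ 2

lemma entry_add (p : ℕ) [Fact p.Prime] [CharP F p] (u u' v : F × F) :
    entry p (u + u') v = entry p u v + entry p u' v := by
  simp only [entry, Prod.fst_add, Prod.snd_add, add_pow_char]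
  ring

lemma entry_sub (p : ℕ) [Fact p.Prime] [CharP F p] (u u' v : F × F) :
    entry p (u - u') v = entry p u v - entry p u' v := by
  simp only [entry, Prod.fst_sub, Prod.snd_sub, sub_pow_char]
  ring

/-- A nonzero row is balanced. -/
lemma card_entry (p : ℕ) (hp : p ≠ 0) (u : F × F) (hu : u ≠ 0) (c : F) :
    Nat.card {v : F × F // entry p u v = c} = Nat.card F := by
  obtain ⟨a, b⟩ := u
  by_cases ha : a = 0
  · have hb : b ≠ 0 := by
      rintro rfl
      exact hu (by simp [ha])
    refine Nat.card_congr
      { toFun := fun v => v.1.2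
        invFun := fun y => ⟨(c / b, y), by simp [entry, ha, hp]; field_simp⟩
        left_inv := ?_
        right_inv := fun y => rfl }
    rintro ⟨⟨x, y⟩, h⟩
    simp [entry, ha, hp] at h
    simp only [Subtype.mk.injEq, Prod.mk.injEq, and_true]
    rw [← h]; field_simp
  · refine Nat.card_congr
      { toFun := fun v => v.1.1
        invFun := fun x => ⟨(x, (c - b * x - a ^ p * x ^ 2) / a), by
          simp only [entry]; field_simp; ring⟩
        left_inv := ?_
        right_inv := fun y => rfl }
    rintro ⟨⟨x, y⟩, h⟩
    simp only [entry] at h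
    refine Subtype.ext (Prod.ext rfl ?_)
    change (c - b * x - a ^ p * x ^ 2) / a = y
    rw [← h]; field_simp; ring

section Indexed

variable {ι : Type*} (σ : ι ≃ F × F)

/-- The matrix with entries `entry p`, its rows and columns relabelled along `σ`. -/
def ghMat (p : ℕ) : Matrix ι ι F := fun i j => entry p (σ i) (σ j)

/-- The functions `1, x, y, x²` on the column set. -/
def fourVec : Fin 4 → ι → F :=
  ![fun _ => 1, fun s => (σ s).1, fun s => (σ s).2, fun s => (σ s).1 ^ 2]

/-- The functions `1, x` on the column set. -/
def twoVec : Fin 2 → ι → F := ![fun _ => 1, fun s => (σ s).1]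

/-- The codeword `β + b x + a y + a^p x²`. -/
def word (p : ℕ) (a b β : F) : ι → F := fun s => entry p (a, b) (σ s) + β

lemma mem_code (p : ℕ) (v : ι → F) :
    v ∈ ghCode (ghMat σ p) ↔ ∃ a b β : F, v = word σ p a b β := by
  constructor
  · rintro ⟨i, β, rfl⟩
    exact ⟨(σ i).1, (σ i).2, β, rfl⟩
  · rintro ⟨a, b, β, rfl⟩
    exact ⟨σ.symm (a, b), β, by funext s; simp [word, ghMat]⟩

lemma word_add (p : ℕ) [Fact p.Prime] [CharP F p] (a b β a' b' β' : F) :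
    word σ p a b β + word σ p a' b' β' = word σ p (a + a') (b + b') (β + β') := by
  funext s
  have := entry_add p (a, b) (a', b') (σ s)
  simp only [Prod.mk_add_mk] at this
  simp only [word, Pi.add_apply, this]
  ring

lemma word_sub (p : ℕ) [Fact p.Prime] [CharP F p] (a b β a' b' β' : F) :
    word σ p a b β - word σ p a' b' β' = word σ p (a - a') (b - b') (β - β') := by
  rw [sub_eq_iff_eq_add, word_add]
  simp

lemma linInd_four (t : F) (h0 : t ≠ 0) (h1 : t ≠ 1) : LinearIndependent F (fourVec σ) := by
  rw [Fintype.linearIndependent_iff]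
  intro g hg
  have key : ∀ x y : F, g 0 + g 1 * x + g 2 * y + g 3 * x ^ 2 = 0 := by
    intro x y
    have := congrFun hg (σ.symm (x, y))
    simpa [Fin.sum_univ_four, fourVec] using this
  have e0 : g 0 = 0 := by simpa using key 0 0
  have e2 : g 2 = 0 := by simpa [e0] using key 0 1
  have e13 : g 1 + g 3 = 0 := by simpa [e0, e2] using key 1 0
  have et : g 1 * t + g 3 * t ^ 2 = 0 := by simpa [e0, e2] using key t 0
  have e3 : g 3 = 0 := by
    have : g 3 * (t * (t - 1)) = 0 := by linear_combination et - t * e13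
    simpa [h0, sub_ne_zero.mpr h1] using this
  have e1 : g 1 = 0 := by simpa [e3] using e13
  intro i
  fin_cases i <;> assumption

lemma linInd_two : LinearIndependent F (twoVec σ) := by
  rw [Fintype.linearIndependent_iff]
  intro g hg
  have key : ∀ x : F, g 0 + g 1 * x = 0 := by
    intro x
    have := congrFun hg (σ.symm (x, 0))
    simpa [Fin.sum_univ_two, twoVec] using this
  have e0 : g 0 = 0 := by simpa using key 0
  have e1 : g 1 = 0 := by simpa [e0] using key 1
  intro i
  fin_cases i <;> assumption

lemma word_eq_sum (p : ℕ) (a b β : F) :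
    word σ p a b β = β • fourVec σ 0 + b • fourVec σ 1 + a • fourVec σ 2
      + a ^ p • fourVec σ 3 := by
  funext s
  simp [word, entry, fourVec]
  ring

lemma span_code (p : ℕ) (hp : p ≠ 0) (t : F) (ht : t ^ p ≠ t) :
    Submodule.span F (ghCode (ghMat σ p)) = Submodule.span F (Set.range (fourVec σ)) := by
  apply le_antisymm
  · rw [Submodule.span_le]
    intro v hv
    obtain ⟨a, b, β, rfl⟩ := (mem_code σ p v).1 hv
    rw [word_eq_sum]
    have h : ∀ i, fourVec σ i ∈ Submodule.span F (Set.range (fourVec σ)) :=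
      fun i => Submodule.subset_span ⟨i, rfl⟩
    exact add_mem (add_mem (add_mem (Submodule.smul_mem _ _ (h 0)) (Submodule.smul_mem _ _ (h 1)))
      (Submodule.smul_mem _ _ (h 2))) (Submodule.smul_mem _ _ (h 3))
  · have hw : ∀ a b β, word σ p a b β ∈ Submodule.span F (ghCode (ghMat σ p)) :=
      fun a b β => Submodule.subset_span ((mem_code σ p _).2 ⟨a, b, β, rfl⟩)
    have h0 := hw 0 0 1
    have h1 := hw 0 1 0
    have h10 := hw 1 0 0
    have ht0 := hw t 0 0
    simp only [word_eq_sum, zero_smul, one_smul, zero_pow hp, add_zero, zero_add, one_pow]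
      at h0 h1 h10 ht0
    have h3 : fourVec σ 3 ∈ Submodule.span F (ghCode (ghMat σ p)) := by
      have hd := Submodule.smul_mem _ (t ^ p - t)⁻¹ (sub_mem ht0 (Submodule.smul_mem _ t h10))
      convert hd using 1
      rw [smul_add, add_sub_add_left_eq_sub, ← sub_smul, smul_smul,
        inv_mul_cancel₀ (sub_ne_zero.mpr ht), one_smul]
    have h2 : fourVec σ 2 ∈ Submodule.span F (ghCode (ghMat σ p)) := by
      simpa using sub_mem h10 h3
    rw [Submodule.span_le]
    rintro _ ⟨i, rfl⟩
    fin_cases i <;> assumption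

/-- Comparing the coefficients of `y` and `x²`, which is possible by linear independence. -/
lemma smul_word_mem (p : ℕ) (t : F) (h0 : t ≠ 0) (h1 : t ≠ 1) (α a b β : F)
    (h : α • word σ p a b β ∈ ghCode (ghMat σ p)) : α * a ^ p = (α * a) ^ p := by
  obtain ⟨a', b', β', h⟩ := (mem_code σ p _).1 h
  have hl := Fintype.linearIndependent_iff.1 (linInd_four σ t h0 h1)
    ![α * β - β', α * b - b', α * a - a', α * a ^ p - a' ^ p] (by
      rw [word_eq_sum, word_eq_sum, ← sub_eq_zero] at h
      rw [← h]
      simp only [Fin.sum_univ_four, Matrix.cons_val]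
      module)
  have h2 : α * a - a' = 0 := hl 2
  have h3 : α * a ^ p - a' ^ p = 0 := hl 3
  rw [sub_eq_zero.1 h2, sub_eq_zero.1 h3]

lemma kerSet_code (p : ℕ) [Fact p.Prime] [CharP F p] (t : F) (ht : t ^ p ≠ t) :
    kerSet (ghCode (ghMat σ p)) = Submodule.span F (Set.range (twoVec σ)) := by
  have hp : p ≠ 0 := (Fact.out : p.Prime).ne_zero
  have h0 : t ≠ 0 := by rintro rfl; simp [hp] at ht
  have h1 : t ≠ 1 := by rintro rfl; simp at ht
  ext v
  constructor
  · intro hv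
    have hmem : ∀ α : F, α • v ∈ ghCode (ghMat σ p) := by
      intro α
      rw [← hv α]
      exact ⟨0, (mem_code σ p _).2 ⟨0, 0, 0, by funext s; simp [word, entry, hp]⟩, by simp⟩
    obtain ⟨a, b, β, hab⟩ := (mem_code σ p v).1 (by simpa using hmem 1)
    have hm := smul_word_mem σ p t h0 h1 t a b β (hab ▸ hmem t)
    have ha : a = 0 := by
      have : (t ^ p - t) * a ^ p = 0 := by rw [mul_pow] at hm; linear_combination -hm
      simpa [sub_ne_zero.mpr ht, hp] using this
    have : v = β • twoVec σ 0 + b • twoVec σ 1 := by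
      rw [hab, ha]
      funext s
      simp [word, entry, twoVec, hp]
      ring
    rw [this]
    exact add_mem (Submodule.smul_mem _ _ (Submodule.subset_span ⟨0, rfl⟩))
      (Submodule.smul_mem _ _ (Submodule.subset_span ⟨1, rfl⟩))
  · intro hv α
    obtain ⟨g, rfl⟩ := (Submodule.mem_span_range_iff_exists_fun F).1 hv
    have hw : α • ∑ i, g i • twoVec σ i = word σ p 0 (α * g 1) (α * g 0) := by
      funext s
      simp [word, entry, twoVec, hp]
      ring
    rw [hw]
    ext w
    constructor
    · rintro ⟨c, hc, rfl⟩
      obtain ⟨a, b, β, rfl⟩ := (mem_code σ p c).1 hc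
      exact (mem_code σ p _).2 ⟨_, _, _, word_add σ p _ _ _ _ _ _⟩
    · intro hc
      obtain ⟨a, b, β, rfl⟩ := (mem_code σ p w).1 hc
      exact ⟨word σ p a b β - word σ p 0 (α * g 1) (α * g 0),
        (mem_code σ p _).2 ⟨_, _, _, word_sub σ p _ _ _ _ _ _⟩, by simp⟩

lemma isGH_ghMat (p : ℕ) [Fact p.Prime] [CharP F p] : IsGH (Nat.card F) (ghMat σ p) := by
  intro i j hij c
  rw [← card_entry p (Fact.out : p.Prime).ne_zero (σ i - σ j)
    (sub_ne_zero.mpr (σ.injective.ne hij)) c]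
  refine Nat.card_congr (σ.subtypeEquiv fun s => ?_)
  rw [entry_sub]
  rfl

end Indexed

lemma isFpAdditive_ghMat (p e : ℕ) [Fact p.Prime] {ι : Type*}
    (σ : ι ≃ GaloisField p e × GaloisField p e) : IsFpAdditive p (ghCode (ghMat σ p)) := by
  have hp : p ≠ 0 := (Fact.out : p.Prime).ne_zero
  let S : AddSubgroup (ι → GaloisField p e) :=
    { carrier := ghCode (ghMat σ p)
      zero_mem' := (mem_code σ p _).2 ⟨0, 0, 0, by funext s; simp [word, entry, hp]⟩
      add_mem' := by
        intro v w hv hw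
        obtain ⟨a, b, β, rfl⟩ := (mem_code σ p v).1 hv
        obtain ⟨a', b', β', rfl⟩ := (mem_code σ p w).1 hw
        exact (mem_code σ p _).2 ⟨_, _, _, word_add σ p _ _ _ _ _ _⟩
      neg_mem' := by
        intro v hv
        obtain ⟨a, b, β, rfl⟩ := (mem_code σ p v).1 hv
        refine (mem_code σ p _).2 ⟨0 - a, 0 - b, 0 - β, ?_⟩
        rw [← word_sub, neg_eq_zero_sub]
        congr 1
        funext s
        simp [word, entry, hp] }
  exact ⟨AddSubgroup.toZModSubmodule p S, rfl⟩

end GHConstruction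

open GHConstruction in
theorem stmt7 (p e : ℕ) [Fact p.Prime] (he : 1 < e) :
    ∃ H : Matrix (Fin (p ^ (2 * e))) (Fin (p ^ (2 * e))) (GaloisField p e),
      IsGH (p ^ e) H ∧ IsNormalized H ∧ IsFpAdditive p (ghCode H) ∧
      kerDim (GaloisField p e) (ghCode H) = 2 ∧
      rankC (GaloisField p e) (ghCode H) = 4 := by
  classical
  have hp : p ≠ 0 := (Fact.out : p.Prime).ne_zero
  have hcard : Nat.card (GaloisField p e) = p ^ e := GaloisField.card p e (by omega)
  obtain ⟨t, ht⟩ := exists_pow_ne p e he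
  have h0 : t ≠ 0 := by rintro rfl; simp [hp] at ht
  have h1 : t ≠ 1 := by rintro rfl; simp at ht
  have hpos : 0 < p ^ (2 * e) := Nat.pos_of_ne_zero (pow_ne_zero _ hp)
  -- Normalization requires the index `0` to correspond to the row and column `(0, 0)`.
  obtain ⟨σ, hσ⟩ : ∃ σ : Fin (p ^ (2 * e)) ≃ GaloisField p e × GaloisField p e,
      σ ⟨0, hpos⟩ = 0 := by
    have hc : Nat.card (GaloisField p e × GaloisField p e) = p ^ (2 * e) := by
      rw [Nat.card_prod, hcard, two_mul, pow_add]
    let τ := (Finite.equivFinOfCardEq hc).symm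
    exact ⟨τ.trans (Equiv.swap (τ ⟨0, hpos⟩) 0), by simp⟩
  refine ⟨ghMat σ p, hcard ▸ isGH_ghMat σ p, ?_, isFpAdditive_ghMat p e σ, ?_, ?_⟩
  · rintro i j (h | h)
    · have : σ i = 0 := (congrArg σ (Fin.ext h)).trans hσ
      simp [ghMat, entry, this, hp]
    · have : σ j = 0 := (congrArg σ (Fin.ext h)).trans hσ
      simp [ghMat, entry, this]
  · rw [kerDim, kerSet_code σ p t ht, Submodule.span_eq, finrank_span_eq_card (linInd_two σ),
      Fintype.card_fin]
  · rw [rankC, span_code σ p hp t ht, finrank_span_eq_card (linInd_four σ t h0 h1),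
      Fintype.card_fin]
end

section
/- For every prime p, every e > 1 and every h > 1, setting q = p^e, and for every integer r with h + 2 ≤ r ≤ h + e, there exists a normalized generalized Hadamard matrix H(p^e, p^{(h−1)e}) over F_q (of order q^h) such that the GH code C_H is an F_p-additive code of length n = p^{he} = q^h with ker(C_H) = h and rank(C_H) = r. -/
/-!
Write `q = p ^ e`, `F` for the field with `q` elements, `h = m + 2` and `r = h + t` with
`2 ≤ t ≤ e`. Rows and columns are both indexed by `F × F × F ^ m`, through a bijection sending the
index `0` to the origin. The row `(w, u, v)` is the function

  `(a, b, y) ↦ w a + u b + v · y + ∑_{1 ≤ k < t} w ^ (p ^ k) b ^ (k + 1)`.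

It is additive in `(w, u, v)`, so a difference of two rows is again a row, and a nonzero row is
balanced: it is affine with nonzero slope in the direction of `a` if `w ≠ 0`, and it is a nonzero
linear form if `w = 0` (`exists_direction`, `card_fiber`).

The functions `1, b, y_j, a, b², …, b ^ t` are linearly independent because `t < q`
(`evalMap_injective`), so all questions about the code can be settled on coefficient vectors
`(α, u, v, c)` in `F ^ (m + 2 + t)`, where the code is the set of those vectors with
`c = (w, w ^ p, w ^ (p ^ 2), …)` for some `w`.

* Rank: the characters `w ↦ w ^ (p ^ k)`, `k < e`, are distinct, hence independent by Dedekind,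
  so these vectors span the whole space (`span_codeCoef`), of dimension `m + 2 + t = r`.
* Kernel: the part `c = 0` is linear of dimension `m + 2 = h` and lies in the kernel. A kernel
  element with parameter `w ≠ 0` would give `β w ^ p = (β w) ^ p`, that is `β = β ^ p`, for all
  `β` in `F`, contradicting `e > 1` (`kerSet_image`).
-/

open scoped BigOperators

/-- The space of coefficient vectors `(α, u, v, c)`. -/
abbrev Coef (F : Type*) (m t : ℕ) : Type _ := F × F × (Fin m → F) × (Fin t → F)

/-- The point set `F^(m+2)`, with a point written as `(a, b, y)`. -/
abbrev Pt (F : Type*) (m : ℕ) : Type _ := F × F × (Fin m → F)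

/-- The function multiplied by the coefficient `c k`: the coordinate `a` for `k = 0`, and the
power `b ^ (k + 1)` for `k ≥ 1`. -/
def mon {F : Type*} [Field F] (k : ℕ) (a b : F) : F := if k = 0 then a else b ^ (k + 1)

/-- The linear map sending `(α, u, v, c)` to the function
`(a, b, y) ↦ α + u b + v · y + c₀ a + ∑_{k ≥ 1} c_k b ^ (k + 1)`. -/
def evalMap (F : Type*) [Field F] (m t : ℕ) : Coef F m t →ₗ[F] (Pt F m → F) where
  toFun d x := d.1 + d.2.1 * x.2.1 + ∑ j, d.2.2.1 j * x.2.2 j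
    + ∑ k : Fin t, d.2.2.2 k * mon k x.1 x.2.1
  map_add' d d' := by
    funext x
    simp only [Prod.fst_add, Prod.snd_add, Pi.add_apply, add_mul, Finset.sum_add_distrib]
    ring
  map_smul' s d := by
    funext x
    simp only [Prod.smul_fst, Prod.smul_snd, Pi.smul_apply, smul_eq_mul, RingHom.id_apply,
      mul_add, Finset.mul_sum, mul_assoc]

lemma evalMap_apply {F : Type*} [Field F] {m t : ℕ} (d : Coef F m t) (x : Pt F m) :
    evalMap F m t d x = d.1 + d.2.1 * x.2.1 + ∑ j, d.2.2.1 j * x.2.2 j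
    + ∑ k : Fin t, d.2.2.2 k * mon k x.1 x.2.1 := rfl

lemma evalMap_injective {F : Type*} [Field F] [Finite F] {m t : ℕ} (ht : 0 < t)
    (hcard : t < Nat.card F) : Function.Injective (evalMap F m t) := by
  rw [← LinearMap.ker_eq_bot, LinearMap.ker_eq_bot']
  rintro ⟨α, u, v, c⟩ h0
  have h : ∀ (a b : F) (y : Fin m → F), α + u * b + ∑ j, v j * y j + ∑ k : Fin t, c k * mon k a b = 0 :=
    fun a b y => congrFun h0 (a, b, y)
  have hα : α = 0 := by simpa [mon] using h 0 0 0
  subst hα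
  have hv : v = 0 := by
    funext j
    simpa [mon, Pi.single_apply] using h 0 0 (Pi.single j 1)
  subst hv
  have hc0 : c ⟨0, ht⟩ = 0 := by
    have := h 1 0 0
    rw [Finset.sum_eq_single (⟨0, ht⟩ : Fin t)] at this
    · simpa [mon] using this
    · intro k _ hk
      have : (k : ℕ) ≠ 0 := fun h => hk (Fin.ext h)
      simp [mon, this]
    · simp
  -- What remains is a polynomial in `b` of degree at most `t`, vanishing on all of `F`.
  let P : Polynomial F := Polynomial.C u * Polynomial.X
    + ∑ k : Fin t, Polynomial.C (c k) * Polynomial.X ^ ((k : ℕ) + 1)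
  have hPdeg : P.natDegree ≤ t := by
    refine Polynomial.natDegree_add_le_of_degree_le ?_ ?_
    · exact (Polynomial.natDegree_C_mul_le _ _).trans (Polynomial.natDegree_X_le.trans ht)
    · refine Polynomial.natDegree_sum_le_of_forall_le _ _ fun k _ => ?_
      exact (Polynomial.natDegree_C_mul_X_pow_le _ _).trans k.2
  have hP : P = 0 := by
    have := Fintype.ofFinite F
    refine Polynomial.eq_zero_of_natDegree_lt_card_of_eval_eq_zero P
      (f := (id : F → F)) Function.injective_id ?_ ?_
    · intro b
      have hb := h 0 b 0
      have : ∀ k : Fin t, c k * mon k 0 b = c k * b ^ ((k : ℕ) + 1) := by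
        intro k
        by_cases hk : (k : ℕ) = 0
        · have : k = ⟨0, ht⟩ := Fin.ext hk
          simp [this, hc0]
        · simp [mon, hk]
      simp only [this] at hb
      simpa [P, Polynomial.eval_finsetSum] using hb
    · rw [← Nat.card_eq_fintype_card]; omega
  have hcoef : ∀ n : ℕ, (if n = 1 then u else 0)
      + ∑ k : Fin t, (if n = (k : ℕ) + 1 then c k else 0) = 0 := by
    intro n
    have := congrArg (fun Q => Polynomial.coeff Q n) hP
    simpa [P, Polynomial.coeff_C_mul, Polynomial.coeff_X, Polynomial.coeff_X_pow, eq_comm] using this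
  have hc : c = 0 := by
    funext k
    by_cases hk : (k : ℕ) = 0
    · have : k = ⟨0, ht⟩ := Fin.ext hk
      rw [this, hc0]; rfl
    · have := hcoef (k + 1)
      rw [Finset.sum_eq_single k] at this
      · simpa [hk] using this
      · intro l _ hl
        have : (k : ℕ) ≠ l := fun h => hl (Fin.ext h.symm)
        simp [this]
      · simp
  subst hc
  have hu : u = 0 := by simpa using hcoef 1
  subst hu
  rfl

/-- The coefficient vectors of the codewords: those whose last component is a vector of Frobenius
conjugates `(w, w ^ p, w ^ p², …)`. -/
def codeCoef (F : Type*) [Field F] (p m t : ℕ) : Set (Coef F m t) :=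
  {d | ∃ w : F, d.2.2.2 = fun k : Fin t => w ^ p ^ (k : ℕ)}

/-- A primitive element of `F` separates the powers of Frobenius. -/
lemma exists_separating {F : Type*} [Field F] [Finite F] {p e : ℕ} (hp : 1 < p) (he : 1 < e)
    (hcard : Nat.card F = p ^ e) :
    ∃ g : F, ∀ i < e, ∀ j < e, g ^ p ^ i = g ^ p ^ j → i = j := by
  obtain ⟨g, hg⟩ := IsCyclic.exists_generator (α := Fˣ)
  refine ⟨g, fun i hi j hj hij => ?_⟩
  have hord : orderOf g = p ^ e - 1 := by
    rw [orderOf_eq_card_of_forall_mem_zpowers hg, Nat.card_units, hcard]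
  have hlt : ∀ i < e, p ^ i < orderOf g := by
    intro i hi
    rw [hord]
    obtain ⟨f, rfl⟩ : ∃ f, e = f + 1 := ⟨e - 1, by omega⟩
    have h1 : p ^ i ≤ p ^ f := Nat.pow_le_pow_right (by omega) (by omega)
    have h2 : 2 ≤ p ^ f := by
      calc 2 ≤ p ^ 1 := by rw [pow_one]; exact hp
        _ ≤ p ^ f := Nat.pow_le_pow_right (by omega) (by omega)
    have h3 : p ^ (f + 1) ≥ p ^ f * 2 := by
      rw [pow_succ]; exact Nat.mul_le_mul_left _ hp
    omega
  have hij' : g ^ p ^ i = g ^ p ^ j := by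
    apply Units.ext; simpa using hij
  exact Nat.pow_right_injective hp (pow_injOn_Iio_orderOf (hlt i hi) (hlt j hj) hij')

/-- Independence of the distinct characters `w ↦ w ^ p ^ k`, `k < t ≤ e`. -/
lemma frob_independent {F : Type*} [Field F] [Finite F] {p e t : ℕ} (hp : 1 < p) (he : 1 < e)
    (hcard : Nat.card F = p ^ e) (hte : t ≤ e) (c : Fin t → F)
    (h : ∀ w : F, ∑ k : Fin t, c k * w ^ p ^ (k : ℕ) = 0) : c = 0 := by
  obtain ⟨g, hg⟩ := exists_separating hp he hcard
  have hinj : Function.Injective (fun k : Fin t => (powMonoidHom (p ^ (k : ℕ)) : F →* F)) := by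
    intro i j hij
    refine Fin.ext (hg i (by omega) j (by omega) ?_)
    simpa using DFunLike.congr_fun hij g
  have hli := (linearIndependent_monoidHom F F).comp _ hinj
  funext k
  refine Fintype.linearIndependent_iff.1 hli c ?_ k
  funext w
  simpa using h w

lemma span_codeCoef {F : Type*} [Field F] [Finite F] {p e m t : ℕ} (hp : 1 < p) (he : 1 < e)
    (hcard : Nat.card F = p ^ e) (hte : t ≤ e) :
    Submodule.span F (codeCoef F p m t) = ⊤ := by
  by_contra hne
  obtain ⟨f, hf0, hf⟩ := Submodule.exists_le_ker_of_lt_top _ (lt_top_iff_ne_top.2 hne)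
  have hD : ∀ d ∈ codeCoef F p m t, f d = 0 := fun d hd => hf (Submodule.subset_span hd)
  have hfrob : ∀ w : F, f (0, 0, 0, fun k => w ^ p ^ (k : ℕ)) = 0 := fun w => hD _ ⟨w, rfl⟩
  have hlin : ∀ d : Coef F m t, d.2.2.2 = 0 → f d = 0 := fun d hd => hD _ ⟨0, by
    rw [hd]; funext k; simp [show p ≠ 0 by omega]⟩
  let g : (Fin t → F) →ₗ[F] F := f ∘ₗ LinearMap.inr F F _ ∘ₗ LinearMap.inr F F _ ∘ₗ
    LinearMap.inr F (Fin m → F) (Fin t → F)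
  have hg : ∀ c, g c = f (0, 0, 0, c) := fun c => rfl
  have hgz : (fun k => g (Pi.single k 1)) = 0 := by
    refine frob_independent hp he hcard hte _ fun w => ?_
    have := hfrob w
    rw [← hg, LinearMap.pi_apply_eq_sum_univ g] at this
    rw [← this]
    refine Finset.sum_congr rfl fun k _ => ?_
    rw [smul_eq_mul, mul_comm]
    congr 2
    funext j
    simp [Pi.single_apply, eq_comm]
  have hg0 : g = 0 := by
    apply LinearMap.pi_ext'
    intro k
    ext
    simpa using congrFun hgz k
  apply hf0
  refine LinearMap.ext fun d => ?_
  obtain ⟨α, u, v, c⟩ := d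
  have hs : ((α, u, v, c) : Coef F m t) = (α, u, v, 0) + (0, 0, 0, c) := by simp
  rw [hs, map_add, hlin _ rfl, ← hg, hg0]
  simp

/-- The linear part of the code: coefficient vectors with vanishing last component. -/
def linCoef (F : Type*) [Field F] (m t : ℕ) : Submodule F (Coef F m t) :=
  LinearMap.ker (LinearMap.snd F (Fin m → F) (Fin t → F) ∘ₗ LinearMap.snd F F _ ∘ₗ
    LinearMap.snd F F _)

lemma mem_linCoef {F : Type*} [Field F] {m t : ℕ} {d : Coef F m t} :
    d ∈ linCoef F m t ↔ d.2.2.2 = 0 := Iff.rfl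

lemma finrank_linCoef {F : Type*} [Field F] {m t : ℕ} :
    Module.finrank F (linCoef F m t) = m + 2 := by
  let T : Coef F m t →ₗ[F] (Fin t → F) :=
    LinearMap.snd F (Fin m → F) (Fin t → F) ∘ₗ LinearMap.snd F F _ ∘ₗ LinearMap.snd F F _
  have hsurj : LinearMap.range T = ⊤ := LinearMap.range_eq_top.2 fun c => ⟨(0, 0, 0, c), rfl⟩
  have h := LinearMap.finrank_range_add_finrank_ker T
  rw [hsurj, finrank_top] at h
  simp only [Module.finrank_prod, Module.finrank_self, Module.finrank_fin_fun] at h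
  change Module.finrank F (LinearMap.ker T) = _
  omega

/-- If `β d` is a coefficient vector of a codeword for every scalar `β`, then comparing the first
two conjugates gives `β w ^ p = (β w) ^ p` for all `β`, which forces `w = 0`. -/
lemma mem_linCoef_of_smul_mem {F : Type*} [Field F] [Finite F] {p e m t : ℕ} (hp : 1 < p)
    (he : 1 < e) (hcard : Nat.card F = p ^ e) (ht : 2 ≤ t) {d : Coef F m t}
    (hd : ∀ β : F, β • d ∈ codeCoef F p m t) : d ∈ linCoef F m t := by
  obtain ⟨w, hw⟩ := hd 1
  rw [one_smul] at hw
  obtain ⟨g, hg⟩ := exists_separating hp he hcard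
  obtain ⟨w', hw'⟩ := hd g
  have hk : ∀ k : Fin t, g * w ^ p ^ (k : ℕ) = w' ^ p ^ (k : ℕ) := by
    intro k
    have := congrFun hw' k
    simpa [hw] using this
  have h0 : g * w = w' := by simpa using hk ⟨0, by omega⟩
  have h1 : g * w ^ p = w' ^ p := by simpa using hk ⟨1, by omega⟩
  rw [← h0, mul_pow] at h1
  have hw0 : w = 0 := by
    by_contra hne
    have h2 : g = g ^ p := mul_right_cancel₀ (pow_ne_zero p hne) h1
    have := hg 0 (by omega) 1 he (by simpa using h2)
    omega
  rw [mem_linCoef, hw, hw0]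
  funext k
  simp [show p ≠ 0 by omega]

/-- The kernel of a code with coefficient set `codeCoef` is its linear part. -/
lemma kerSet_image {F : Type*} [Field F] [Finite F] {p e m t : ℕ} (hp : 1 < p)
    (he : 1 < e) (hcard : Nat.card F = p ^ e) (ht : 2 ≤ t) {ι : Type*}
    (Ψ : Coef F m t →ₗ[F] (ι → F)) (hΨ : Function.Injective Ψ) :
    kerSet (Ψ '' codeCoef F p m t) = Ψ '' (linCoef F m t : Set (Coef F m t)) := by
  ext x
  constructor
  · intro hx
    have h0 : (0 : ι → F) ∈ Ψ '' codeCoef F p m t :=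
      ⟨0, ⟨0, by funext k; simp [show p ≠ 0 by omega]⟩, map_zero Ψ⟩
    have hmem : ∀ β : F, β • x ∈ Ψ '' codeCoef F p m t := by
      intro β
      rw [← hx β]
      exact ⟨0, h0, by simp⟩
    obtain ⟨d, hd, hdx⟩ := hmem 1
    rw [one_smul] at hdx
    refine ⟨d, mem_linCoef_of_smul_mem hp he hcard ht fun β => ?_, hdx⟩
    obtain ⟨d', hd', hdx'⟩ := hmem β
    rw [← hdx, ← map_smul] at hdx'
    rwa [← hΨ hdx']
  · rintro ⟨d, hd, rfl⟩ β
    have hd : d.2.2.2 = 0 := hd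
    have htr : ∀ (γ : F) (c), c ∈ codeCoef F p m t → γ • d + c ∈ codeCoef F p m t := by
      rintro γ c ⟨w, hw⟩
      exact ⟨w, by simp [hd, hw]⟩
    ext y
    constructor
    · rintro ⟨_, ⟨c, hc, rfl⟩, rfl⟩
      exact ⟨β • d + c, htr β c hc, by simp⟩
    · rintro ⟨c, hc, rfl⟩
      exact ⟨Ψ ((-β) • d + c), ⟨_, htr (-β) c hc, rfl⟩, by simp⟩

/-- The coefficient vector of the row of the matrix indexed by the point `(w, u, v)`. -/
def rowCoef {F : Type*} [Field F] (p m t : ℕ) (x : Pt F m) : Coef F m t :=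
  (0, x.2.1, x.2.2, fun k => x.1 ^ p ^ (k : ℕ))

lemma rowCoef_sub {F : Type*} [Field F] {p m t : ℕ} [Fact p.Prime] [CharP F p] (x y : Pt F m) :
    rowCoef p m t (x - y) = rowCoef p m t x - rowCoef p m t y := by
  ext <;> simp [rowCoef, sub_pow_char_pow]

lemma rowCoef_add {F : Type*} [Field F] {p m t : ℕ} [Fact p.Prime] [CharP F p] (x y : Pt F m) :
    rowCoef p m t (x + y) = rowCoef p m t x + rowCoef p m t y := by
  ext <;> simp [rowCoef, add_pow_char_pow]

/-- A function that grows with slope one along some direction `z` is balanced: translations along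
`z` identify all its fibres. -/
lemma card_fiber {F V : Type*} [Field F] [Finite F] [AddCommGroup V] [Module F V]
    (f : V → F) (z : V) (hz : ∀ x (s : F), f (x + s • z) = f x + s) (a : F) :
    Nat.card V = Nat.card F * Nat.card {x : V // f x = a} := by
  rw [← Nat.card_prod]
  refine Nat.card_congr ⟨fun x => (f x - a, ⟨x + (a - f x) • z, by rw [hz]; ring⟩),
    fun y => y.2.1 + y.1 • z, fun x => ?_, ?_⟩
  · simp only [add_assoc, ← add_smul]; simp
  · rintro ⟨s, x, hx⟩
    simp only [hz, hx, Prod.mk.injEq, Subtype.mk.injEq, add_assoc, ← add_smul]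
    simp

/-- A nonzero row is affine with nonzero slope along some coordinate direction. -/
lemma exists_direction {F : Type*} [Field F] {p m t : ℕ} (hp : 1 < p) (ht : 0 < t) (d : Pt F m)
    (hd : d ≠ 0) : ∃ z : Pt F m, ∀ x (s : F), evalMap F m t (rowCoef p m t d) (x + s • z)
      = evalMap F m t (rowCoef p m t d) x + s := by
  obtain ⟨w, u, v⟩ := d
  by_cases hw : w = 0
  · have hlin : ∀ x, evalMap F m t (rowCoef p m t (w, u, v)) x = u * x.2.1 + ∑ j, v j * x.2.2 j := by
      intro x
      simp [evalMap_apply, rowCoef, hw, show p ≠ 0 by omega]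
    simp only [hlin]
    by_cases hu : u = 0
    · obtain ⟨j, hj⟩ : ∃ j, v j ≠ 0 := by
        by_contra! hv
        exact hd (by rw [hw, hu, show v = 0 from funext hv]; rfl)
      refine ⟨(0, 0, Pi.single j (v j)⁻¹), fun x s => ?_⟩
      simp [hu, mul_add, Finset.sum_add_distrib, Pi.single_apply]
      field_simp
    · refine ⟨(0, u⁻¹, 0), fun x s => ?_⟩
      simp
      field_simp
      ring
  · refine ⟨(w⁻¹, 0, 0), fun x s => ?_⟩
    obtain ⟨t, rfl⟩ : ∃ n, t = n + 1 := ⟨t - 1, by omega⟩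
    simp only [evalMap_apply, rowCoef, Fin.sum_univ_succ, mon]
    simp
    field_simp
    ring

lemma exists_pointed_equiv {F : Type*} [Field F] [Finite F] {p e m : ℕ} (hp : 1 < p)
    (hcard : Nat.card F = p ^ e) : ∃ φ : Fin (p ^ ((m + 2) * e)) ≃ Pt F m,
      ∀ i, i.val = 0 → φ i = 0 := by
  classical
  have hV : Nat.card (Pt F m) = p ^ ((m + 2) * e) := by
    rw [Nat.card_prod, Nat.card_prod, Nat.card_fun, hcard, Nat.card_fin]
    rw [← pow_mul]; ring
  let ψ : Fin (p ^ ((m + 2) * e)) ≃ Pt F m := (Finite.equivFinOfCardEq hV).symm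
  refine ⟨ψ.trans (Equiv.swap (ψ ⟨0, by positivity⟩) 0), fun i hi => ?_⟩
  have : i = ⟨0, by positivity⟩ := Fin.ext hi
  subst this
  simp

theorem stmt8 (p e h r : ℕ) [Fact p.Prime] (he : 1 < e) (hh : 1 < h)
    (hr₁ : h + 2 ≤ r) (hr₂ : r ≤ h + e) :
    ∃ H : Matrix (Fin (p ^ (h * e))) (Fin (p ^ (h * e))) (GaloisField p e),
      IsGH (p ^ ((h - 1) * e)) H ∧ IsNormalized H ∧ IsFpAdditive p (ghCode H) ∧
      kerDim (GaloisField p e) (ghCode H) = h ∧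
      rankC (GaloisField p e) (ghCode H) = r := by
  obtain ⟨m, rfl⟩ : ∃ m, h = m + 2 := ⟨h - 2, by omega⟩
  obtain ⟨t, rfl⟩ : ∃ t, r = m + 2 + t := ⟨r - (m + 2), by omega⟩
  have ht : 2 ≤ t := by omega
  have hte : t ≤ e := by omega
  have hp : 1 < p := (Fact.out : p.Prime).one_lt
  have hcard : Nat.card (GaloisField p e) = p ^ e := GaloisField.card p e (by omega)

  obtain ⟨φ, hφ⟩ := exists_pointed_equiv (m := m) hp hcard
  let Ψ : Coef (GaloisField p e) m t →ₗ[GaloisField p e]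
      (Fin (p ^ ((m + 2) * e)) → GaloisField p e) :=
    LinearMap.funLeft _ _ φ ∘ₗ evalMap (GaloisField p e) m t
  have hΨapp : ∀ d s, Ψ d s = evalMap (GaloisField p e) m t d (φ s) := fun _ _ => rfl
  have hΨ : Function.Injective Ψ :=
    (LinearMap.funLeft_injective_of_surjective (GaloisField p e) _ _ φ.surjective).comp
      (evalMap_injective (by omega) (by rw [hcard]; exact hte.trans_lt (Nat.lt_pow_self hp)))
  let H : Matrix (Fin (p ^ ((m + 2) * e))) (Fin (p ^ ((m + 2) * e))) (GaloisField p e) :=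
    fun i s => Ψ (rowCoef p m t (φ i)) s
  have hconst : ∀ (α : GaloisField p e) s, Ψ (α, 0, 0, 0) s = α := by
    intro α s
    simp [hΨapp, evalMap_apply]
  have hC : ghCode H = Ψ '' codeCoef (GaloisField p e) p m t := by
    ext x
    constructor
    · rintro ⟨i, α, rfl⟩
      refine ⟨rowCoef p m t (φ i) + (α, 0, 0, 0), ⟨(φ i).1, by simp [rowCoef]⟩, ?_⟩
      funext s
      rw [map_add, Pi.add_apply, hconst]
    · rintro ⟨⟨α, u, v, c⟩, ⟨w, hw⟩, rfl⟩
      refine ⟨φ.symm (w, u, v), α, ?_⟩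
      have hw : c = fun k : Fin t => w ^ p ^ (k : ℕ) := hw
      have hd : ((α, u, v, c) : Coef (GaloisField p e) m t)
          = rowCoef p m t (w, u, v) + (α, 0, 0, 0) := by simp [rowCoef, hw]
      funext s
      rw [hd, map_add, Pi.add_apply, hconst]
      simp [H]
  refine ⟨H, ?_, ?_, ?_, ?_, ?_⟩
  · intro i j hij a
    have hd : φ i - φ j ≠ 0 := sub_ne_zero.2 fun h => hij (φ.injective h)
    obtain ⟨z, hz⟩ := exists_direction (t := t) hp (by omega) _ hd
    have hfib := card_fiber _ z hz a
    have hbij : Nat.card {s // H i s - H j s = a} = Nat.card {x : Pt (GaloisField p e) m //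
        evalMap (GaloisField p e) m t (rowCoef p m t (φ i - φ j)) x = a} := by
      refine Nat.card_congr (φ.subtypeEquiv fun s => ?_)
      rw [rowCoef_sub, map_sub]
      rfl
    rw [hbij]
    rw [← Nat.card_congr φ, Nat.card_fin, hcard] at hfib
    refine Nat.eq_of_mul_eq_mul_left (show 0 < p ^ e by positivity) ?_
    rw [← hfib, ← pow_add, show m + 2 - 1 = m + 1 by omega]
    congr 1
    ring
  · rintro i j (hi | hj)
    · change Ψ (rowCoef p m t (φ i)) j = 0
      have h0 : rowCoef p m t (0 : Pt (GaloisField p e) m) = 0 := by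
        simpa using rowCoef_sub (p := p) (t := t) (0 : Pt (GaloisField p e) m) 0
      rw [hφ i hi, h0, map_zero]
      rfl
    · change Ψ (rowCoef p m t (φ i)) j = 0
      rw [hΨapp, hφ j hj]
      simp [evalMap_apply, rowCoef, mon]
  · let D : AddSubgroup (Coef (GaloisField p e) m t) :=
      { carrier := codeCoef (GaloisField p e) p m t
        zero_mem' := ⟨0, by funext k; simp [show p ≠ 0 by omega]⟩
        add_mem' := by
          rintro d d' ⟨w, hw⟩ ⟨w', hw'⟩
          exact ⟨w + w', by funext k; simp [hw, hw', add_pow_char_pow]⟩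
        neg_mem' := by
          rintro d ⟨w, hw⟩
          refine ⟨-w, ?_⟩
          funext k
          have := sub_pow_char_pow (p := p) (0 : GaloisField p e) w (n := (k : ℕ))
          simpa [hw, show p ≠ 0 by omega] using this.symm }
    exact ⟨AddSubgroup.toZModSubmodule p (D.map Ψ.toAddMonoidHom), hC⟩
  · rw [kerDim, hC, kerSet_image hp he hcard ht Ψ hΨ, Submodule.span_image, Submodule.span_eq,
      ← (Submodule.equivMapOfInjective Ψ hΨ _).finrank_eq, finrank_linCoef]
  · rw [rankC, hC, Submodule.span_image, span_codeCoef hp he hcard hte, Submodule.map_top,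
      LinearMap.finrank_range_of_inj hΨ]
    simp only [Module.finrank_prod, Module.finrank_self, Module.finrank_fin_fun]
    ring
end

section
/- For every prime p, every e > 1 and every h > 1, setting q = p^e and t = he, and for every integer k with 2 ≤ k ≤ h and every integer r with 2h − k + 2 ≤ r ≤ 1 + t − (e−1)(k−1), there exists a normalized generalized Hadamard matrix H(p^e, p^{(h−1)e}) over F_q such that the GH code C_H is an F_p-additive code of length n = p^{he} = q^h with ker(C_H) = k and rank(C_H) = r. -/
/-!
Put `q = p ^ e`. Rows and columns are both indexed by `F_q ^ h`, and the row of
`u` is the function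
`f_u z = ∑ i, u_i z_i + ∑ (i, l), u_i ^ (p ^ l) * z_{i-1} ^ (p ^ l)`,
where `(i, l)` runs over a set of pairs with `i ≥ k - 1` and `1 ≤ l < e` (indices start at `0`)
that contains all the pairs `(i, 1)`, `i ≥ k - 1`.

* `f` is biadditive. If `i` is the last index with `u_i ≠ 0`, then `f_u` restricted to the `i`-th
  axis is `c ↦ u_i c`. So `f_u` is surjective, all its fibres have the same size, and the matrix
  is generalised Hadamard (`pairing_single`, `card_fibre_pairing`).
* The functions `1` and `z_i ^ (p ^ l)` with `l < e` are linearly independent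
  (`eq_zero_of_frobenius_sum`). By duality, the coefficient vectors of the codewords span
  the whole coefficient space (`span_coeff_eq_top`). Hence the rank is one more than the number of
  monomials used, and that number can be chosen anywhere between `h + (h - k + 1)` and
  `h + (h - k + 1) (e - 1)` (`exists_exponents`).
* If all multiples of `f_u + α` lie in the code, comparing the coefficients of `z_i` and
  `z_{i-1} ^ p` gives `β u_i ^ p = (β u_i) ^ p` for all `β`, so `u_i = 0` for `i ≥ k - 1`.
  The kernel is thus spanned by `1, z_0, …, z_{k-2}` (`mem_kerSet_iff`,
  `kerDim_codeGroup`).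
-/

open scoped BigOperators

section Aux

/-- The linear map sending coefficients `(c, (a_t))` to the function
`s ↦ c + ∑ t, a_t z_i ^ (p ^ l)`, with `(i, l) = m t` and `z = ε s`. -/
noncomputable def monMap (p : ℕ) {F : Type*} [Field F] {h : ℕ} {ι τ : Type*} [Fintype τ]
    (ε : ι → Fin h → F) (m : τ → Fin h × ℕ) : (F × (τ → F)) →ₗ[F] (ι → F) where
  toFun w := fun s => w.1 + ∑ t, w.2 t * ε s (m t).1 ^ p ^ (m t).2
  map_add' x y := by
    funext s
    simp only [Prod.fst_add, Prod.snd_add, Pi.add_apply, add_mul, Finset.sum_add_distrib]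
    ring
  map_smul' c x := by
    funext s
    simp only [Prod.smul_fst, Prod.smul_snd, Pi.smul_apply, smul_eq_mul, RingHom.id_apply,
      mul_add, Finset.mul_sum, mul_assoc]

/-- The column coordinate occurring in the term indexed by `(i, l)`: it is `i` when `l = 0`, and
`i - 1` otherwise. -/
def colIdx {h : ℕ} (t : Fin h × ℕ) : Fin h :=
  if t.2 = 0 then t.1 else ⟨t.1 - 1, lt_of_le_of_lt (Nat.sub_le _ _) t.1.2⟩

/-- The biadditive form `∑ (i, l) ∈ T, u_i ^ (p ^ l) * z_j ^ (p ^ l)`, with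
`j = colIdx (i, l)`. -/
def pairing (p : ℕ) {F : Type*} [Field F] {h : ℕ} (T : Finset (Fin h × ℕ))
    (u z : Fin h → F) : F :=
  ∑ t : T, u t.1.1 ^ p ^ t.1.2 * z (colIdx t.1) ^ p ^ t.1.2

/-- The admissible sets of index pairs `(i, l)`: all of them have `l < e`, those
with `l ≠ 0` have `i ≥ d`, and every `(i, 0)` as well as every `(i, 1)` with `i ≥ d` is present. -/
structure Admissible {h : ℕ} (d e : ℕ) (T : Finset (Fin h × ℕ)) : Prop where
  zero_mem : ∀ i, (i, 0) ∈ T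
  one_mem : ∀ i : Fin h, d ≤ i → (i, 1) ∈ T
  lt : ∀ t ∈ T, t.2 < e
  le : ∀ t ∈ T, t.2 ≠ 0 → d ≤ t.1

theorem exists_exponents (e h d N : ℕ) (he : 1 < e) (hd : d < h)
    (h1 : h + (h - d) ≤ N) (h2 : N ≤ h + (h - d) * (e - 1)) :
    ∃ T : Finset (Fin h × ℕ), Admissible d e T ∧ T.card = N := by
  classical
  have hdis : ∀ A : Finset ℕ, 0 ∉ A → Disjoint ((Finset.univ : Finset (Fin h)) ×ˢ ({0} : Finset ℕ))
      (Finset.Ici (⟨d, hd⟩ : Fin h) ×ˢ A) := by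
    intro A hA
    rw [Finset.disjoint_left]
    rintro ⟨i, l⟩ hx hy
    simp only [Finset.mem_product, Finset.mem_singleton] at hx hy
    exact hA (hx.2 ▸ hy.2)
  obtain ⟨T, hT1, hT2, hT3⟩ := Finset.exists_subsuperset_card_eq
    (s := (Finset.univ : Finset (Fin h)) ×ˢ ({0} : Finset ℕ) ∪ Finset.Ici (⟨d, hd⟩ : Fin h) ×ˢ {1})
    (t := (Finset.univ : Finset (Fin h)) ×ˢ ({0} : Finset ℕ) ∪
      Finset.Ici (⟨d, hd⟩ : Fin h) ×ˢ Finset.Ico 1 e) (n := N)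
    (by
      apply Finset.union_subset_union_right
      apply Finset.product_subset_product_right
      intro x hx
      simp only [Finset.mem_singleton, Finset.mem_Ico] at hx ⊢
      omega)
    (by
      rw [Finset.card_union_of_disjoint (hdis _ (by simp))]
      simpa [Finset.card_product, Fin.card_Ici] using h1)
    (by
      rw [Finset.card_union_of_disjoint (hdis _ (by simp))]
      simpa [Finset.card_product, Fin.card_Ici] using h2)
  refine ⟨T, ⟨fun i => hT1 (by simp), fun i hi => hT1 (by simp [Fin.le_def, hi]), ?_, ?_⟩, hT3⟩
  · intro t ht
    have := hT2 ht
    simp only [Finset.mem_union, Finset.mem_product, Finset.mem_univ, Finset.mem_singleton,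
      Finset.mem_Ico, true_and] at this
    omega
  · intro t ht h0
    have := hT2 ht
    simp only [Finset.mem_union, Finset.mem_product, Finset.mem_univ, Finset.mem_singleton,
      Finset.mem_Ici, true_and, Fin.le_def] at this
    tauto

/-- Distinct terms of the form involve distinct monomials in the column variables. The bound
`0 < d` makes `i ↦ i - 1` injective on the indices in use. -/
theorem Admissible.colIdx_injective {h d e : ℕ} {T : Finset (Fin h × ℕ)} (hd : 0 < d)
    (hT : Admissible d e T) :
    Function.Injective fun t : T => (colIdx t.1, t.1.2) := by
  rintro ⟨⟨i, l⟩, ht⟩ ⟨⟨j, l'⟩, ht'⟩ heq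
  simp only [Prod.mk.injEq] at heq
  obtain ⟨h1, rfl⟩ := heq
  by_cases hl : l = 0
  · subst hl
    simp only [colIdx, if_true] at h1
    subst h1
    rfl
  · have h2 := hT.le _ ht hl
    have h3 := hT.le _ ht' hl
    simp only [colIdx, hl, if_false, Fin.mk.injEq] at h1 h2 h3
    have : i = j := Fin.ext (by omega)
    subst this
    rfl

variable {p e h : ℕ} [Fact p.Prime] {F : Type*} [Field F]

/-- A nonzero `p`-polynomial of degree less than `q` does not vanish on all of `F_q`. -/
theorem frobenius_indep (hF : Nat.card F = p ^ e) (c : ℕ → F)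
    (hc : ∀ x : F, ∑ l ∈ Finset.range e, c l * x ^ p ^ l = 0) : ∀ l < e, c l = 0 := by
  have hp := (Fact.out : p.Prime)
  have : Finite F := Nat.finite_of_card_ne_zero (by rw [hF]; exact (pow_pos hp.pos _).ne')
  have := Fintype.ofFinite F
  let P : Polynomial F := ∑ l ∈ Finset.range e, Polynomial.C (c l) * Polynomial.X ^ p ^ l
  have hP : P = 0 := by
    by_contra hP0
    have hdeg : P.natDegree < Nat.card F := by
      rw [hF, Polynomial.natDegree_lt_iff_degree_lt hP0]
      refine (Polynomial.degree_sum_le _ _).trans_lt ?_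
      rw [Finset.sup_lt_iff (WithBot.bot_lt_coe _)]
      intro l hl
      refine (Polynomial.degree_C_mul_X_pow_le _ _).trans_lt ?_
      exact_mod_cast Nat.pow_lt_pow_right hp.one_lt (Finset.mem_range.1 hl)
    apply hP0
    refine Polynomial.eq_zero_of_natDegree_lt_card_of_eval_eq_zero P
      (f := (id : F → F)) Function.injective_id (fun x => ?_) (by rwa [← Nat.card_eq_fintype_card])
    simpa [P, Polynomial.eval_finsetSum] using hc x
  intro l hl
  have := congrArg (fun Q => Polynomial.coeff Q (p ^ l)) hP
  simp only [P, Polynomial.finsetSum_coeff, Polynomial.coeff_C_mul, Polynomial.coeff_X_pow,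
    Polynomial.coeff_zero, Nat.pow_right_inj hp.two_le] at this
  simpa [hl] using this

/-- Linear independence of `1` and distinct monomials `z_i ^ (p ^ l)`, `l < e`, as functions
on `F_q ^ h`. -/
theorem eq_zero_of_frobenius_sum (hF : Nat.card F = p ^ e) {τ : Type*} [Fintype τ]
    (m : τ → Fin h × ℕ) (hm : Function.Injective m) (hme : ∀ t, (m t).2 < e)
    (c₀ : F) (c : τ → F)
    (H : ∀ z : Fin h → F, c₀ + ∑ t, c t * z (m t).1 ^ p ^ (m t).2 = 0) : c₀ = 0 ∧ c = 0 := by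
  classical
  have hp := (Fact.out : p.Prime)
  have hne : ∀ l, p ^ l ≠ 0 := fun l => (pow_pos hp.pos l).ne'
  have h0 : c₀ = 0 := by
    have := H 0
    simpa [zero_pow (hne _)] using this
  refine ⟨h0, ?_⟩
  subst h0
  funext t₀
  have key := frobenius_indep (p := p) (e := e) hF
    (fun l => ∑ t, if m t = ((m t₀).1, l) then c t else 0) (fun x => by
      have := H (Pi.single (m t₀).1 x)
      rw [zero_add] at this
      refine Eq.trans ?_ this
      simp only [Finset.sum_mul]
      rw [Finset.sum_comm]
      refine Finset.sum_congr rfl fun t _ => ?_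
      rw [Finset.sum_eq_single (m t).2]
      · by_cases hh : (m t).1 = (m t₀).1
        · simp [← hh]
        · have hmt : m t ≠ ((m t₀).1, (m t).2) := fun heq => hh (Prod.ext_iff.1 heq).1
          rw [if_neg hmt, Pi.single_eq_of_ne hh, zero_pow (hne _)]
          simp
      · intro l _ hl
        rw [if_neg (fun h' => hl (congrArg Prod.snd h').symm), zero_mul]
      · intro hn
        exact absurd (Finset.mem_range.2 (hme t)) hn) (m t₀).2 (hme t₀)
  simpa [hm.eq_iff] using key

theorem monMap_injective (hF : Nat.card F = p ^ e) {ι τ : Type*} [Fintype τ]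
    {ε : ι → Fin h → F} (hε : Function.Surjective ε)
    (m : τ → Fin h × ℕ) (hm : Function.Injective m) (hme : ∀ t, (m t).2 < e) :
    Function.Injective (monMap p ε m) := by
  rw [injective_iff_map_eq_zero]
  rintro ⟨c₀, c⟩ hc
  have := eq_zero_of_frobenius_sum hF m hm hme c₀ c (fun z => by
    obtain ⟨s, rfl⟩ := hε z
    exact congrFun hc s)
  exact Prod.ext this.1 this.2

/-- A linear functional vanishing on all the coefficient vectors `(α, (u_i ^ (p ^ l)))` is a linear
relation between the monomials, hence zero. -/
theorem span_coeff_eq_top (hF : Nat.card F = p ^ e) {τ : Type*} [Fintype τ]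
    (m : τ → Fin h × ℕ) (hm : Function.Injective m) (hme : ∀ t, (m t).2 < e) :
    Submodule.span F {w : F × (τ → F) | ∃ (u : Fin h → F) (α : F),
      w = (α, fun t => u (m t).1 ^ p ^ (m t).2)} = ⊤ := by
  classical
  by_contra hne
  obtain ⟨f, hf0, hf⟩ := Submodule.exists_le_ker_of_lt_top _ (lt_top_iff_ne_top.2 hne)
  have hval : ∀ w : F × (τ → F), f w = f (1, 0) * w.1 + ∑ t, f (0, Pi.single t 1) * w.2 t := by
    rintro ⟨a, b⟩
    have hb : (a, b) = a • ((1, 0) : F × (τ → F)) + ∑ t, b t • ((0, Pi.single t 1) : F × (τ → F)) := by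
      ext
      · simp [Prod.fst_sum]
      · simp [Prod.snd_sum, Finset.sum_apply, Pi.single_apply]
    conv_lhs => rw [hb]
    rw [map_add, map_sum, map_smul]
    simp only [map_smul, smul_eq_mul, mul_comm]
  have hz := eq_zero_of_frobenius_sum hF m hm hme (f (1, 0)) (fun t => f (0, Pi.single t 1))
    (fun u => by
      have : f (1, fun t => u (m t).1 ^ p ^ (m t).2) = 0 := hf (Submodule.subset_span ⟨u, 1, rfl⟩)
      rw [hval] at this
      simpa using this)
  apply hf0
  refine LinearMap.ext fun w => ?_
  have hz2 : ∀ t, f (0, Pi.single t 1) = 0 := fun t => congrFun hz.2 t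
  rw [hval w, hz.1]
  simp only [hz2, zero_mul, Finset.sum_const_zero, add_zero, LinearMap.zero_apply]

variable [CharP F p]

theorem pairing_add_left (T : Finset (Fin h × ℕ)) (u v z : Fin h → F) :
    pairing p T (u + v) z = pairing p T u z + pairing p T v z := by
  simp only [pairing, ← Finset.sum_add_distrib, Pi.add_apply, add_pow_char_pow, add_mul]

theorem pairing_add_right (T : Finset (Fin h × ℕ)) (u v z : Fin h → F) :
    pairing p T u (v + z) = pairing p T u v + pairing p T u z := by
  simp only [pairing, ← Finset.sum_add_distrib, Pi.add_apply, add_pow_char_pow, mul_add]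

omit [CharP F p] in
theorem pairing_zero_left (T : Finset (Fin h × ℕ)) (z : Fin h → F) : pairing p T 0 z = 0 := by
  have hp := (Fact.out : p.Prime)
  simp [pairing, zero_pow (pow_pos hp.pos _).ne']

omit [CharP F p] in
theorem pairing_zero_right (T : Finset (Fin h × ℕ)) (z : Fin h → F) : pairing p T z 0 = 0 := by
  have hp := (Fact.out : p.Prime)
  simp [pairing, zero_pow (pow_pos hp.pos _).ne']

theorem pairing_sub_left (T : Finset (Fin h × ℕ)) (u v z : Fin h → F) :
    pairing p T (u - v) z = pairing p T u z - pairing p T v z := by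
  have := pairing_add_left (p := p) T (u - v) v z
  rw [sub_add_cancel] at this
  rw [this, add_sub_cancel_right]

omit [CharP F p] in
/-- On the axis of the last nonzero coordinate of `u`, only the term `u_i z_i` survives. -/
theorem pairing_single {d : ℕ} {T : Finset (Fin h × ℕ)} (hd : 0 < d) (hT : Admissible d e T)
    (u : Fin h → F) (i : Fin h) (hi : ∀ j, i < j → u j = 0) (c : F) :
    pairing p T u (Pi.single i c) = u i * c := by
  have hp := (Fact.out : p.Prime)
  rw [pairing, Finset.sum_eq_single (⟨(i, 0), hT.zero_mem i⟩ : T)]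
  · simp [colIdx]
  · rintro ⟨⟨j, l⟩, ht⟩ _ hne
    by_cases hl : l = 0
    · subst hl
      have hji : j ≠ i := by rintro rfl; exact hne rfl
      simp [colIdx, hji]
    · by_cases hc : colIdx (j, l) = i
      · have h2 := hT.le _ ht hl
        have : i < j := by
          rw [← hc, Fin.lt_def]
          simp only [colIdx, hl, if_false] at h2 ⊢
          omega
        simp [hi j this, zero_pow (pow_pos hp.pos _).ne']
      · simp [Pi.single_eq_of_ne hc, zero_pow (pow_pos hp.pos _).ne']
  · simp

theorem card_fibre_pairing (hF : Nat.card F = p ^ e) {d : ℕ} {T : Finset (Fin h × ℕ)}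
    (hd : 0 < d) (hT : Admissible d e T) (u : Fin h → F) (hu : u ≠ 0) (a : F) :
    Nat.card {z : Fin h → F // pairing p T u z = a} = p ^ ((h - 1) * e) := by
  classical
  have hp := (Fact.out : p.Prime)
  have : Finite F := Nat.finite_of_card_ne_zero (by rw [hF]; exact (pow_pos hp.pos _).ne')
  have := Fintype.ofFinite F
  let φ : (Fin h → F) →+ F :=
    { toFun := pairing p T u
      map_zero' := pairing_zero_right T u
      map_add' := pairing_add_right T u }
  have hsurj : Function.Surjective φ := by
    obtain ⟨i₀, hi₀⟩ := Function.ne_iff.1 hu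
    have hne : (Finset.univ.filter fun i => u i ≠ 0).Nonempty := ⟨i₀, by simpa using hi₀⟩
    have hm := Finset.max'_mem _ hne
    have hlast : ∀ j, (Finset.univ.filter fun i => u i ≠ 0).max' hne < j → u j = 0 := by
      intro j hj
      by_contra hj0
      exact absurd (Finset.le_max' _ j (by simpa using hj0)) (not_le.2 hj)
    generalize (Finset.univ.filter fun i => u i ≠ 0).max' hne = i at hm hlast
    have hi0 : u i ≠ 0 := by simpa using hm
    intro b
    refine ⟨Pi.single i ((u i)⁻¹ * b), ?_⟩
    change pairing p T u _ = b
    rw [pairing_single hd hT u i hlast, mul_inv_cancel_left₀ hi0]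
  have hh : 0 < h := by
    rcases Nat.eq_zero_or_pos h with rfl | h0
    · exact absurd (Subsingleton.elim u 0) hu
    · exact h0
  have hfib : ∀ b : F, Nat.card {z // φ z = b} = Nat.card {z // φ z = a} := by
    intro b
    simp only [Nat.card_eq_fintype_card, Fintype.card_subtype]
    exact AddMonoidHom.card_fiber_eq_of_mem_range φ (hsurj b) (hsurj a)
  have htot : Nat.card (Fin h → F) = Nat.card F * Nat.card {z // φ z = a} := by
    rw [← Nat.card_congr (Equiv.sigmaFiberEquiv φ), Nat.card_sigma,
      Finset.sum_congr rfl fun b _ => hfib b]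
    simp
  have hcard : Nat.card (Fin h → F) = p ^ e * p ^ ((h - 1) * e) := by
    rw [Nat.card_fun, hF, Nat.card_eq_fintype_card, Fintype.card_fin, ← pow_mul, ← pow_add]
    congr 1
    obtain ⟨n, rfl⟩ : ∃ n, h = n + 1 := ⟨h - 1, by omega⟩
    simp only [Nat.add_sub_cancel]
    ring
  rw [hcard, hF] at htot
  exact (Nat.eq_of_mul_eq_mul_left (pow_pos hp.pos _) htot).symm

/-- The code as an additive subgroup. -/
def codeGroup (p : ℕ) [Fact p.Prime] {F : Type*} [Field F] [CharP F p] {h : ℕ} {ι : Type*}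
    (ε : ι → Fin h → F) (T : Finset (Fin h × ℕ)) : AddSubgroup (ι → F) where
  carrier := {v | ∃ (u : Fin h → F) (α : F), v = fun s => pairing p T u (ε s) + α}
  zero_mem' := ⟨0, 0, by funext s; simp [pairing_zero_left]⟩
  add_mem' := by
    rintro _ _ ⟨u, α, rfl⟩ ⟨v, β, rfl⟩
    refine ⟨u + v, α + β, ?_⟩
    funext s
    simp only [Pi.add_apply, pairing_add_left]
    ring
  neg_mem' := by
    rintro _ ⟨u, α, rfl⟩
    refine ⟨0 - u, -α, ?_⟩
    funext s
    simp only [Pi.neg_apply, pairing_sub_left, pairing_zero_left]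
    ring

theorem kerSet_addSubgroup {ι : Type*} (C : AddSubgroup (ι → F)) :
    kerSet (C : Set (ι → F)) = {x | ∀ β : F, β • x ∈ C} := by
  ext x
  refine forall_congr' fun β => ⟨fun hx => ?_, fun hx => ?_⟩
  · have : β • x + 0 ∈ (C : Set (ι → F)) := hx ▸ ⟨0, C.zero_mem, rfl⟩
    simpa using this
  · ext y
    constructor
    · rintro ⟨c, hc, rfl⟩
      exact C.add_mem hx hc
    · intro hy
      exact ⟨-(β • x) + y, C.add_mem (C.neg_mem hx) hy, by simp⟩

omit [Fact p.Prime] [CharP F p] in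
theorem monMap_coeff {ι : Type*} (ε : ι → Fin h → F) (T : Finset (Fin h × ℕ))
    (u : Fin h → F) (α : F) :
    monMap p ε (fun t : T => (colIdx t.1, t.1.2)) (α, fun t => u t.1.1 ^ p ^ t.1.2)
      = fun s => pairing p T u (ε s) + α := by
  funext s
  simp [monMap, pairing, add_comm]

theorem mem_kerSet_iff_s9 (he : 1 < e) (hF : Nat.card F = p ^ e) {d : ℕ} {T : Finset (Fin h × ℕ)}
    (hd : 0 < d) (hT : Admissible d e T) {ι : Type*} {ε : ι → Fin h → F}
    (hε : Function.Surjective ε) (x : ι → F) :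
    x ∈ kerSet (codeGroup p ε T : Set (ι → F)) ↔
      ∃ (u : Fin h → F) (α : F), (∀ i : Fin h, d ≤ i → u i = 0) ∧
        x = fun s => pairing p T u (ε s) + α := by
  have hp := (Fact.out : p.Prime)
  rw [kerSet_addSubgroup]
  constructor
  · intro hx
    obtain ⟨u, α, hu⟩ := hx 1
    rw [one_smul] at hu
    refine ⟨u, α, fun i hi => ?_, hu⟩
    by_contra hui
    have hfrob : ∀ β : F, β ^ p = β := by
      intro β
      obtain ⟨v, γ, hv⟩ := hx β
      rw [hu, ← monMap_coeff, ← monMap_coeff, ← map_smul] at hv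
      have hv := congrArg Prod.snd (monMap_injective hF hε _ (hT.colIdx_injective hd)
        (fun t => hT.lt t.1 t.2) hv)
      have h0 := congrFun hv ⟨(i, 0), hT.zero_mem i⟩
      have h1 := congrFun hv ⟨(i, 1), hT.one_mem i hi⟩
      simp only [Prod.smul_snd, Pi.smul_apply, smul_eq_mul, pow_zero, pow_one] at h0 h1
      rw [← h0, mul_pow] at h1
      exact (mul_right_cancel₀ (pow_ne_zero _ hui) h1).symm
    -- The polynomial `X - X ^ p` would vanish on the whole field, although `p < p ^ e`.
    have := frobenius_indep (p := p) hF (fun l => if l = 0 then 1 else if l = 1 then -1 else 0)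
      (fun β => by
        obtain ⟨n, rfl⟩ : ∃ n, e = n + 2 := ⟨e - 2, by omega⟩
        rw [Finset.sum_range_succ', Finset.sum_range_succ']
        simp [hfrob β]) 0 (by omega)
    simp at this
  · rintro ⟨u, α, hu, rfl⟩ β
    refine ⟨β • u, β * α, ?_⟩
    rw [← monMap_coeff, ← monMap_coeff, ← map_smul]
    congr 1
    refine Prod.ext rfl ?_
    funext t
    obtain ⟨⟨i, l⟩, ht⟩ := t
    by_cases hl : l = 0
    · simp [hl]
    · simp [hu i (hT.le _ ht hl), zero_pow (pow_pos hp.pos _).ne']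

theorem kerDim_codeGroup (he : 1 < e) (hF : Nat.card F = p ^ e) {d : ℕ} {T : Finset (Fin h × ℕ)}
    (hd : 0 < d) (hdh : d ≤ h) (hT : Admissible d e T) {ι : Type*} {ε : ι → Fin h → F}
    (hε : Function.Surjective ε) :
    kerDim F (codeGroup p ε T : Set (ι → F)) = d + 1 := by
  have hp := (Fact.out : p.Prime)
  let m : Fin d → Fin h × ℕ := fun i => (Fin.castLE hdh i, 0)
  have hm : Function.Injective m := fun i j hij =>
    Fin.castLE_injective hdh (congrArg Prod.fst hij)
  -- For `u` supported on the first `d` coordinates the form is `∑ i < d, u_i z_i`.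
  have hsum : ∀ (u z : Fin h → F), (∀ i : Fin h, d ≤ i → u i = 0) →
      pairing p T u z = ∑ i : Fin d, u (Fin.castLE hdh i) * z (Fin.castLE hdh i) := by
    intro u z hu
    symm
    refine Finset.sum_of_injOn (fun i => (⟨(Fin.castLE hdh i, 0), hT.zero_mem _⟩ : T)) ?_ ?_ ?_ ?_
    · intro i _ j _ hij
      simpa using hij
    · intro i _
      simp
    · rintro ⟨⟨i, l⟩, ht⟩ _ hn
      have hi : d ≤ i := by
        by_cases hl : l = 0
        · subst hl
          by_contra hlt
          exact hn ⟨⟨i, by omega⟩, by simp, rfl⟩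
        · exact hT.le _ ht hl
      simp [hu i hi, zero_pow (pow_pos hp.pos _).ne']
    · intro i _
      simp [colIdx]
  have hker : kerSet (codeGroup p ε T : Set (ι → F)) = LinearMap.range (monMap p ε m) := by
    ext x
    rw [mem_kerSet_iff_s9 he hF hd hT hε]
    constructor
    · rintro ⟨u, α, hu, rfl⟩
      refine ⟨(α, fun i => u (Fin.castLE hdh i)), ?_⟩
      funext s
      rw [hsum u _ hu]
      simp [monMap, m, add_comm]
    · rintro ⟨⟨α, a⟩, rfl⟩
      refine ⟨fun i => if hi : (i : ℕ) < d then a ⟨i, hi⟩ else 0, α, ?_, ?_⟩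
      · intro i hi
        simp [not_lt.2 hi]
      · funext s
        rw [hsum]
        · simp [monMap, m, add_comm]
        · intro i hi
          simp [not_lt.2 hi]
  rw [kerDim, hker, Submodule.span_eq, LinearMap.finrank_range_of_inj
    (monMap_injective hF hε m hm fun _ => by simp only [m]; omega)]
  simp [add_comm]

theorem rankC_codeGroup (hF : Nat.card F = p ^ e) {d : ℕ} {T : Finset (Fin h × ℕ)}
    (hd : 0 < d) (hT : Admissible d e T) {ι : Type*} {ε : ι → Fin h → F}
    (hε : Function.Surjective ε) :
    rankC F (codeGroup p ε T : Set (ι → F)) = T.card + 1 := by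
  have himg : (codeGroup p ε T : Set (ι → F)) =
      monMap p ε (fun t : T => (colIdx t.1, t.1.2)) ''
        {w : F × (T → F) | ∃ (u : Fin h → F) (α : F),
          w = (α, fun t => u t.1.1 ^ p ^ t.1.2)} := by
    ext x
    constructor
    · rintro ⟨u, α, rfl⟩
      exact ⟨_, ⟨u, α, rfl⟩, monMap_coeff ε T u α⟩
    · rintro ⟨_, ⟨u, α, rfl⟩, rfl⟩
      exact ⟨u, α, monMap_coeff ε T u α⟩
  rw [rankC, himg, Submodule.span_image,
    span_coeff_eq_top hF (fun t : T => t.1) Subtype.val_injective (fun t => hT.lt _ t.2),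
    Submodule.map_top, LinearMap.finrank_range_of_inj
    (monMap_injective hF hε _ (hT.colIdx_injective hd) (fun t => hT.lt t.1 t.2))]
  simp [add_comm]

end Aux

theorem stmt9 (p e h k r : ℕ) [Fact p.Prime] (he : 1 < e) (hh : 1 < h)
    (hk₁ : 2 ≤ k) (hk₂ : k ≤ h)
    (hr₁ : 2 * (h : ℤ) - k + 2 ≤ (r : ℤ))
    (hr₂ : (r : ℤ) ≤ 1 + (h * e : ℕ) - ((e : ℤ) - 1) * ((k : ℤ) - 1)) :
    ∃ H : Matrix (Fin (p ^ (h * e))) (Fin (p ^ (h * e))) (GaloisField p e),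
      IsGH (p ^ ((h - 1) * e)) H ∧ IsNormalized H ∧ IsFpAdditive p (ghCode H) ∧
      kerDim (GaloisField p e) (ghCode H) = k ∧
      rankC (GaloisField p e) (ghCode H) = r := by
  classical
  have hp := (Fact.out : p.Prime)
  have hF : Nat.card (GaloisField p e) = p ^ e := GaloisField.card p e (by omega)
  have : Finite (GaloisField p e) :=
    Nat.finite_of_card_ne_zero (by rw [hF]; exact (pow_pos hp.pos _).ne')
  obtain ⟨d, rfl⟩ : ∃ d, k = d + 1 := ⟨k - 1, by omega⟩
  obtain ⟨T, hT, hTc⟩ := exists_exponents e h d (r - 1) he (by omega) (by omega) (by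
    obtain ⟨m, rfl⟩ : ∃ m, h = d + m := ⟨h - d, by omega⟩
    obtain ⟨f, rfl⟩ : ∃ f, e = f + 1 := ⟨e - 1, by omega⟩
    simp only [Nat.add_sub_cancel_left, Nat.add_sub_cancel]
    rw [Nat.sub_le_iff_le_add]
    zify
    push_cast at hr₂
    linarith)
  have hd : 0 < d := by omega
  -- An indexing of `F_q ^ h` that sends `0` to `0`.
  obtain ⟨ε, hε0⟩ : ∃ ε : Fin (p ^ (h * e)) ≃ (Fin h → GaloisField p e),
      ∀ i, i.val = 0 → ε i = 0 := by
    have hcard : Nat.card (Fin (p ^ (h * e))) = Nat.card (Fin h → GaloisField p e) := by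
      rw [Nat.card_fun, hF]
      simp [← pow_mul, mul_comm]
    let ε₀ : Fin (p ^ (h * e)) ≃ (Fin h → GaloisField p e) :=
      (Finite.card_eq.1 hcard).some
    let z : Fin (p ^ (h * e)) := ⟨0, pow_pos hp.pos _⟩
    refine ⟨ε₀.trans (Equiv.swap (ε₀ z) 0), fun i hi => ?_⟩
    have : i = z := Fin.ext hi
    simp [this]
  let H : Matrix (Fin (p ^ (h * e))) (Fin (p ^ (h * e))) (GaloisField p e) :=
    fun i j => pairing p T (ε i) (ε j)
  have hcode : ghCode H = codeGroup p ε T := by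
    ext v
    constructor
    · rintro ⟨i, α, rfl⟩
      exact ⟨ε i, α, rfl⟩
    · rintro ⟨u, α, rfl⟩
      exact ⟨ε.symm u, α, by simp [H]⟩
  refine ⟨H, ?_, ?_, ?_, ?_, ?_⟩
  · intro i j hij a
    rw [← card_fibre_pairing (p := p) hF hd hT (ε i - ε j) (sub_ne_zero.2 (ε.injective.ne hij)) a]
    refine Nat.card_congr (ε.subtypeEquiv fun s => ?_)
    rw [pairing_sub_left]
  · rintro i j (hi | hj)
    · simp only [H, hε0 i hi, pairing_zero_left]
    · simp only [H, hε0 j hj, pairing_zero_right]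
  · exact ⟨AddSubgroup.toZModSubmodule p (codeGroup p ε T), by rw [hcode]; rfl⟩
  · rw [hcode, kerDim_codeGroup he hF hd (by omega) hT ε.surjective]
  · rw [hcode, rankC_codeGroup hF hd hT ε.surjective, hTc]
    omega
end

section
/- For every odd prime p, there exists a normalized generalized Hadamard matrix H(p², 1) over F_{p²} (of order p²) such that the GH code C_H is an F_p-additive code of length n = p² with ker(C_H) = 1 and rank(C_H) = 3. -/
/-!
The matrix is the multiplication table of the Dickson near-field of order `p ^ 2`:
`x ∘ y = x * y` if `y` is a square and `x ∘ y = x ^ p * y` otherwise.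

* For `u ≠ 0` the map `y ↦ u ∘ y` is injective: since `p` is odd, `u` and `u ^ p` differ by a
  nonzero square factor, so squares and nonsquares cannot collide. As `x ∘ y` is additive in `x`,
  the differences of distinct rows are exactly such maps, which gives the GH property with `λ = 1`,
  and the code is additive.
* The row of `x` is `x • a + x ^ p • b`, where `a` and `b` are the restrictions of the identity to
  the squares and to the nonsquares. Evaluating at `0`, at `1` and at a nonsquare shows that
  `1, a, b` are linearly independent. They span the same space as the code, because some `t`
  satisfies `t ^ p ≠ t`; hence the rank is `3`.
* If a kernel element is `x • a + x ^ p • b + α • 1`, comparing coefficients in its multiple by `t`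
  gives `t * x ^ p = (t * x) ^ p`, hence `x = 0`. So the kernel consists of the constants.
-/

open scoped BigOperators

open Classical in
/-- The multiplication `x ∘ y` of the Dickson near-field on `GaloisField p 2`, additive in `x`. -/
noncomputable def dicksonMul (p : ℕ) [Fact p.Prime] (x y : GaloisField p 2) : GaloisField p 2 :=
  if IsSquare y then x * y else x ^ p * y

open Classical in
/-- The identity function restricted to the squares, extended by zero. -/
noncomputable def sqPart (p : ℕ) [Fact p.Prime] (y : GaloisField p 2) : GaloisField p 2 :=
  if IsSquare y then y else 0

open Classical in
/-- The identity function restricted to the nonsquares, extended by zero. -/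
noncomputable def nonsqPart (p : ℕ) [Fact p.Prime] (y : GaloisField p 2) : GaloisField p 2 :=
  if IsSquare y then 0 else y

section
variable (p : ℕ) [Fact p.Prime]

lemma dicksonMul_eq (x y : GaloisField p 2) :
    dicksonMul p x y = x * sqPart p y + x ^ p * nonsqPart p y := by
  unfold dicksonMul sqPart nonsqPart
  split_ifs <;> simp

lemma dicksonMul_add (x x' y : GaloisField p 2) :
    dicksonMul p (x + x') y = dicksonMul p x y + dicksonMul p x' y := by
  simp only [dicksonMul_eq, add_pow_char]
  ring

lemma dicksonMul_zero_left (y : GaloisField p 2) : dicksonMul p 0 y = 0 := by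
  simp [dicksonMul, (Fact.out : p.Prime).ne_zero]

lemma dicksonMul_zero_right (x : GaloisField p 2) : dicksonMul p x 0 = 0 := by
  simp [dicksonMul]

lemma dicksonMul_neg (x y : GaloisField p 2) :
    dicksonMul p (-x) y = -dicksonMul p x y := by
  have h := dicksonMul_add p (-x) x y
  rw [neg_add_cancel, dicksonMul_zero_left] at h
  exact eq_neg_of_add_eq_zero_left h.symm

lemma dicksonMul_sub (x x' y : GaloisField p 2) :
    dicksonMul p (x - x') y = dicksonMul p x y - dicksonMul p x' y := by
  rw [sub_eq_add_neg, dicksonMul_add, dicksonMul_neg, sub_eq_add_neg]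

lemma dicksonMul_collision (hp : p ≠ 2) {u y z : GaloisField p 2} (hu : u ≠ 0)
    (hy : IsSquare y) (h : u * y = u ^ p * z) : IsSquare z := by
  obtain ⟨k, hk⟩ := (Fact.out : p.Prime).odd_of_ne_two hp
  obtain ⟨r, rfl⟩ := hy
  have hz : r * r = u ^ k * u ^ k * z := by
    apply mul_left_cancel₀ hu
    have hpow : u ^ p = u * (u ^ k * u ^ k) := by
      rw [show u ^ p = u ^ (2 * k + 1) from congrArg (u ^ ·) hk]
      ring
    rw [h, hpow]
    ring
  refine ⟨r / u ^ k, ?_⟩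
  have : u ^ k ≠ 0 := pow_ne_zero _ hu
  field_simp
  linear_combination -hz

lemma dicksonMul_injective (hp : p ≠ 2) {u : GaloisField p 2} (hu : u ≠ 0) :
    Function.Injective (dicksonMul p u) := by
  intro y z h
  unfold dicksonMul at h
  split_ifs at h with hy hz hz
  · exact mul_left_cancel₀ hu h
  · exact absurd (dicksonMul_collision p hp hu hy h) hz
  · exact absurd (dicksonMul_collision p hp hu hz h.symm) hy
  · exact mul_left_cancel₀ (pow_ne_zero _ hu) h

lemma exists_nonsquare_gf (hp : p ≠ 2) : ∃ z : GaloisField p 2, ¬ IsSquare z := by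
  have := Fintype.ofFinite (GaloisField p 2)
  exact FiniteField.exists_nonsquare (by rwa [ringChar.eq (GaloisField p 2) p])

/-- Otherwise `X ^ p - X` would have `p ^ 2` roots. -/
lemma exists_pow_ne_self : ∃ t : GaloisField p 2, t ^ p ≠ t := by
  by_contra! h
  have := Fintype.ofFinite (GaloisField p 2)
  have h1 : 1 < p := (Fact.out : p.Prime).one_lt
  have hne := FiniteField.X_pow_card_sub_X_ne_zero (GaloisField p 2) h1
  have hcard := Polynomial.card_le_degree_of_subset_roots
    (p := (Polynomial.X ^ p - Polynomial.X : Polynomial (GaloisField p 2)))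
    (Z := Finset.univ) (by
      intro x _
      rw [Polynomial.mem_roots hne]
      simp [h x])
  rw [FiniteField.X_pow_card_sub_X_natDegree_eq _ h1, Finset.card_univ,
    ← Nat.card_eq_fintype_card, GaloisField.card p 2 two_ne_zero] at hcard
  nlinarith

/-- Linear independence of the functions `1`, `sqPart` and `nonsqPart`. -/
lemma coeff_eq_zero (hp : p ≠ 2) {c x z : GaloisField p 2}
    (h : ∀ y, c + x * sqPart p y + z * nonsqPart p y = 0) : c = 0 ∧ x = 0 ∧ z = 0 := by
  obtain ⟨w, hw⟩ := exists_nonsquare_gf p hp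
  have hw0 : w ≠ 0 := by
    rintro rfl
    simp at hw
  have h0 := h 0
  have h1 := h 1
  have h2 := h w
  simp [sqPart, nonsqPart] at h0
  subst h0
  simp [sqPart, nonsqPart] at h1
  simp [sqPart, nonsqPart, hw, hw0] at h2
  exact ⟨rfl, h1, h2⟩

open Classical in
lemma exists_index_equiv :
    ∃ e : Fin (p ^ 2) ≃ GaloisField p 2, ∀ i : Fin (p ^ 2), i.val = 0 → e i = 0 := by
  have hpos : 0 < p ^ 2 := pow_pos (Fact.out : p.Prime).pos 2
  let f : Fin (p ^ 2) ≃ GaloisField p 2 :=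
    (Finite.equivFinOfCardEq (GaloisField.card p 2 two_ne_zero)).symm
  refine ⟨f.trans (Equiv.swap (f ⟨0, hpos⟩) 0), fun i hi => ?_⟩
  have : i = ⟨0, hpos⟩ := Fin.ext hi
  subst this
  simp

end

theorem stmt11 (p : ℕ) [Fact p.Prime] (hp : p ≠ 2) :
    ∃ H : Matrix (Fin (p ^ 2)) (Fin (p ^ 2)) (GaloisField p 2),
      IsGH 1 H ∧ IsNormalized H ∧ IsFpAdditive p (ghCode H) ∧
      kerDim (GaloisField p 2) (ghCode H) = 1 ∧
      rankC (GaloisField p 2) (ghCode H) = 3 := by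
  obtain ⟨e, he⟩ := exists_index_equiv p
  obtain ⟨t, ht⟩ := exists_pow_ne_self p
  let H : Matrix (Fin (p ^ 2)) (Fin (p ^ 2)) (GaloisField p 2) :=
    fun i s => dicksonMul p (e i) (e s)
  let a : Fin (p ^ 2) → GaloisField p 2 := fun s => sqPart p (e s)
  let b : Fin (p ^ 2) → GaloisField p 2 := fun s => nonsqPart p (e s)
  have hmem : ∀ v : Fin (p ^ 2) → GaloisField p 2,
      v ∈ ghCode H ↔ ∃ x α : GaloisField p 2, ∀ s, v s = dicksonMul p x (e s) + α := by
    intro v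
    constructor
    · rintro ⟨i, α, rfl⟩
      exact ⟨e i, α, fun s => rfl⟩
    · rintro ⟨x, α, h⟩
      exact ⟨e.symm x, α, funext fun s => by simp [H, h]⟩
  have hind : ∀ c x z : GaloisField p 2,
      (∀ s, c + x * a s + z * b s = 0) → c = 0 ∧ x = 0 ∧ z = 0 := by
    intro c x z h
    refine coeff_eq_zero p hp fun y => ?_
    simpa [a, b] using h (e.symm y)
  have hzero : (0 : Fin (p ^ 2) → GaloisField p 2) ∈ ghCode H :=
    (hmem 0).2 ⟨0, 0, fun s => by simp [dicksonMul_zero_left]⟩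
  have hadd : ∀ {v w}, v ∈ ghCode H → w ∈ ghCode H → v + w ∈ ghCode H := by
    intro v w hv hw
    obtain ⟨x, α, hx⟩ := (hmem v).1 hv
    obtain ⟨x', α', hx'⟩ := (hmem w).1 hw
    refine (hmem _).2 ⟨x + x', α + α', fun s => ?_⟩
    rw [Pi.add_apply, hx, hx', dicksonMul_add]
    ring
  have hneg : ∀ {v}, v ∈ ghCode H → -v ∈ ghCode H := by
    intro v hv
    obtain ⟨x, α, hx⟩ := (hmem v).1 hv
    refine (hmem _).2 ⟨-x, -α, fun s => ?_⟩
    rw [Pi.neg_apply, hx, dicksonMul_neg]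
    ring
  refine ⟨H, ?_, ?_, ?_, ?_, ?_⟩
  · intro i j hij α
    have hu : e i - e j ≠ 0 := sub_ne_zero.2 (e.injective.ne hij)
    have hbij : Function.Bijective (dicksonMul p (e i - e j)) :=
      Finite.injective_iff_bijective.1 (dicksonMul_injective p hp hu)
    obtain ⟨y, hy, huniq⟩ := hbij.existsUnique α
    rw [Nat.card_eq_one_iff_exists]
    refine ⟨⟨e.symm y, ?_⟩, ?_⟩
    · simpa [H, dicksonMul_sub] using hy
    · rintro ⟨s, hs⟩
      rw [Subtype.mk.injEq, Equiv.eq_symm_apply]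
      apply huniq
      simpa [H, dicksonMul_sub] using hs
  · rintro i j (h | h)
    · simp [H, he i h, dicksonMul_zero_left]
    · simp [H, he j h, dicksonMul_zero_right]
  · let S : AddSubgroup (Fin (p ^ 2) → GaloisField p 2) :=
      { carrier := ghCode H, zero_mem' := hzero, add_mem' := hadd, neg_mem' := hneg }
    exact ⟨AddSubgroup.toZModSubmodule p S, rfl⟩
  · have hker : Submodule.span (GaloisField p 2) (kerSet (ghCode H)) =
        Submodule.span (GaloisField p 2) {(1 : Fin (p ^ 2) → GaloisField p 2)} := by
      apply le_antisymm
      · rw [Submodule.span_le]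
        intro v hv
        have hv' : ∀ β : GaloisField p 2, β • v ∈ ghCode H := by
          intro β
          rw [← hv β]
          exact ⟨0, hzero, by simp⟩
        obtain ⟨x, α, hx⟩ := (hmem _).1 (hv' 1)
        obtain ⟨x', α', hx'⟩ := (hmem _).1 (hv' t)
        simp only [one_mul, Pi.smul_apply, smul_eq_mul, dicksonMul_eq] at hx hx'
        obtain ⟨-, h1, h2⟩ := hind (t * α - α') (t * x - x') (t * x ^ p - x' ^ p) (by
          intro s
          have h1 := hx s
          have h2 := hx' s
          rw [h1] at h2
          linear_combination h2)
        have hx0 : x = 0 := by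
          rw [← sub_eq_zero.1 h1, mul_pow, ← sub_mul] at h2
          rcases mul_eq_zero.1 h2 with h | h
          · exact absurd (sub_eq_zero.1 h).symm ht
          · exact eq_zero_of_pow_eq_zero h
        refine Submodule.mem_span_singleton.2 ⟨α, funext fun s => ?_⟩
        rw [hx s, hx0]
        simp [(Fact.out : p.Prime).ne_zero]
      · rw [Submodule.span_le, Set.singleton_subset_iff]
        refine Submodule.subset_span fun β => ?_
        have hconst : ∀ γ : GaloisField p 2, γ • (1 : Fin (p ^ 2) → GaloisField p 2) ∈ ghCode H :=
          fun γ =>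
          (hmem _).2 ⟨0, γ, fun s => by simp [dicksonMul_zero_left]⟩
        ext v
        constructor
        · rintro ⟨c, hc, rfl⟩
          exact hadd (hconst β) hc
        · intro hv
          exact ⟨-(β • 1) + v, hadd (hneg (hconst β)) hv, by simp⟩
    have hpos : 0 < p ^ 2 := pow_pos (Fact.out : p.Prime).pos 2
    rw [kerDim, hker, finrank_span_singleton]
    intro h
    exact one_ne_zero (congrFun h ⟨0, hpos⟩)
  · have hli : LinearIndependent (GaloisField p 2)
        ![(1 : Fin (p ^ 2) → GaloisField p 2), a, b] := by
      rw [Fintype.linearIndependent_iff]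
      intro g hg
      obtain ⟨h0, h1, h2⟩ := hind (g 0) (g 1) (g 2) (by
        intro s
        have := congrFun hg s
        simpa [Fin.sum_univ_three] using this)
      intro i
      fin_cases i <;> assumption
    have hspan : Submodule.span (GaloisField p 2) (ghCode H) =
        Submodule.span (GaloisField p 2)
          (Set.range ![(1 : Fin (p ^ 2) → GaloisField p 2), a, b]) := by
      apply le_antisymm
      · rw [Submodule.span_le]
        intro v hv
        obtain ⟨x, α, hx⟩ := (hmem v).1 hv
        have hv' : v = α • (1 : Fin (p ^ 2) → GaloisField p 2) + x • a + x ^ p • b := by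
          funext s
          rw [hx s, dicksonMul_eq]
          simp only [Pi.add_apply, Pi.smul_apply, Pi.one_apply, smul_eq_mul, a, b]
          ring
        rw [hv']
        exact add_mem (add_mem (Submodule.smul_mem _ _ (Submodule.subset_span ⟨0, rfl⟩))
          (Submodule.smul_mem _ _ (Submodule.subset_span ⟨1, rfl⟩)))
          (Submodule.smul_mem _ _ (Submodule.subset_span ⟨2, rfl⟩))
      · have hrow : ∀ x : GaloisField p 2,
            x • a + x ^ p • b ∈ Submodule.span (GaloisField p 2) (ghCode H) := fun x =>
          Submodule.subset_span ((hmem _).2 ⟨x, 0, fun s => by simp [dicksonMul_eq, a, b]⟩)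
        have h1 : a + b ∈ Submodule.span (GaloisField p 2) (ghCode H) := by simpa using hrow 1
        have hb : b ∈ Submodule.span (GaloisField p 2) (ghCode H) := by
          have h3 : (t ^ p - t) • b ∈ Submodule.span (GaloisField p 2) (ghCode H) := by
            have := sub_mem (hrow t) (Submodule.smul_mem _ t h1)
            convert this using 1
            module
          exact (Submodule.smul_mem_iff _ (sub_ne_zero.2 ht)).1 h3
        have ha : a ∈ Submodule.span (GaloisField p 2) (ghCode H) := by simpa using sub_mem h1 hb
        rw [Submodule.span_le]
        rintro _ ⟨i, rfl⟩
        fin_cases i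
        · exact Submodule.subset_span
            ((hmem _).2 ⟨0, 1, fun s => by simp [dicksonMul_zero_left]⟩)
        · exact ha
        · exact hb
    rw [rankC, hspan, finrank_span_eq_card hli, Fintype.card_fin]
end
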